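/- There exists a constant C > 0 (independent of n) such that for every n ≥ 2, sup_{x ∈ ℝ} | P( (I_n − E[I_n]) / sqrt(Var(I_n)) ≤ x ) − Φ(x) | ≤ C / sqrt(n), where I_n is the number of descents of a uniformly random involution of the symmetric group S_n and Φ is the cumulative distribution function of the standard normal distribution. -/

import Mathlib

open Finset

/-- The number of descents of a permutation of `Fin n`:
positions `i` with `i+1 < n` and `π(i) > π(i+1)`. -/
def descents {n : ℕ} (π : Equiv.Perm (Fin n)) : ℕ :=
  (Finset.univ.filter fun i : Fin n =>
    ∃ h : (i : ℕ) + 1 < n, π ⟨(i : ℕ) + 1, h⟩ < π i).card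

/-- The involutions of the symmetric group `S_n`. -/
def involutions (n : ℕ) : Finset (Equiv.Perm (Fin n)) :=
  Finset.univ.filter fun π => π * π = 1

/-- The standard normal cumulative distribution function. -/
noncomputable def stdNormalCDF (x : ℝ) : ℝ :=
  (Real.sqrt (2 * Real.pi))⁻¹ * ∫ t in Set.Iic x, Real.exp (-(t ^ 2) / 2)

/-- Mean number of descents of a uniformly random involution of `S_n`. -/
noncomputable def invMean (n : ℕ) : ℝ :=
  (∑ π ∈ involutions n, (descents π : ℝ)) / (involutions n).card

/-- Variance of the number of descents of a uniformly random involution of `S_n`. -/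
noncomputable def invVar (n : ℕ) : ℝ :=
  (∑ π ∈ involutions n, ((descents π : ℝ) - invMean n) ^ 2) / (involutions n).card

/-- `P((I_n - E I_n)/sqrt(Var I_n) ≤ x)` under the uniform measure on involutions. -/
noncomputable def invCDF (n : ℕ) (x : ℝ) : ℝ :=
  (((involutions n).filter fun π =>
      ((descents π : ℝ) - invMean n) / Real.sqrt (invVar n) ≤ x).card : ℝ) /
    (involutions n).card

/-!
A word over `s` letters is compatible with `π` if it increases weakly, and strictly at the descents
of `π`; there are `(s + n - 1 - des π).choose n` of them. Sending an involution `π` with a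
compatible word `w` to the pairs `(w i, w (π i))` is a bijection onto the multisets of `n` pairs
that are invariant under swapping. Their generating function `(1 - x)^{-s} (1 - x²)^{-s(s-1)/2}`
satisfies a first-order differential equation, so `∑ (s + n - 1 - des π).choose n`, over all
involutions `π`, is a polynomial in `s` with recursively computable coefficients.

Truncating its powers at `0` makes this identity valid for all integers `s`, and its `n`-th
difference in `s` counts the involutions with at most a given number of descents. The `n`-th
difference of a truncated power `s₊^k / k!` is the `(n - k)`-th difference of the distribution
function of a sum of `k` uniform variables (the Irwin–Hall law). The coefficients decay like those
of `exp (x² / 2)`, so the term `k = n` dominates up to an error `O(1 / √n)`, while two differences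
fewer give the mean and the variance. Stein's method with zero-bias coupling compares the
Irwin–Hall law with the normal one.
-/

/-! ### Words compatible with a permutation -/

/-- A word `w` is compatible with `π` when the pairs `(w i, π i)` increase strictly in the
lexicographic order: `w` is weakly increasing, and strictly so at the descents of `π`. -/
def IsCompatible {n : ℕ} {α : Type*} [LinearOrder α] (π : Equiv.Perm (Fin n)) (w : Fin n → α) :
    Prop :=
  StrictMono fun i ↦ toLex (w i, π i)

section WordsWithPrescribedSteps

variable {n s : ℕ} {step : Fin n → ℕ}

lemma partialSum_le_val (hstep : ∀ j, step j ≤ 1) (i : Fin (n + 1)) :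
    Fin.partialSum step i ≤ i := by
  induction i using Fin.induction with
  | zero => simp
  | succ j ih =>
    rw [Fin.partialSum_succ, Fin.val_succ]
    exact add_le_add ih (hstep j)

lemma partialSum_last : Fin.partialSum step (Fin.last n) = ∑ j, step j := by
  rw [Fin.partialSum, Fin.val_last, List.take_of_length_le (by simp), List.sum_ofFn]

lemma val_le_of_strictMono {f : Fin (n + 1) → ℕ} (hf : StrictMono f) (i : Fin (n + 1)) :
    (i : ℕ) ≤ f i := by
  induction i using Fin.induction with
  | zero => exact Nat.zero_le _
  | succ j ih => exact Nat.succ_le_of_lt (ih.trans_lt (hf Fin.castSucc_lt_succ))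

lemma strictMono_add_partialSum (w : Fin (n + 1) → ℕ)
    (hw : ∀ j : Fin n, w j.castSucc < w j.succ + step j) :
    StrictMono fun i ↦ w i + Fin.partialSum step i := by
  refine Fin.strictMono_iff_lt_succ.2 fun j ↦ ?_
  have := hw j
  rw [Fin.partialSum_succ]
  lia

lemma monotone_sub_partialSum (hstep : ∀ j, step j ≤ 1) {v : Fin (n + 1) → ℕ}
    (hv : StrictMono v) : Monotone fun i ↦ v i - Fin.partialSum step i := by
  refine Fin.monotone_iff_le_succ.2 fun j ↦ ?_
  have := hv (Fin.castSucc_lt_succ (i := j))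
  have := hstep j
  rw [Fin.partialSum_succ]
  lia

/-- Words over `Fin s` rising weakly where `step = 1` and strictly where `step = 0`, made strictly
increasing by adding the partial sums of `step`. -/
def wordsWithStepsEquiv (hstep : ∀ j, step j ≤ 1) :
    {w : Fin (n + 1) → Fin s // ∀ j : Fin n, (w j.castSucc : ℕ) < w j.succ + step j} ≃
      (Fin (n + 1) ↪o Fin (s + ∑ j, step j)) where
  toFun w := OrderEmbedding.ofStrictMono
    (fun i ↦ ⟨w.1 i + Fin.partialSum step i, by
      have hle := (strictMono_add_partialSum (fun i ↦ w.1 i) w.2).monotone (Fin.le_last i)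
      have hlast := (w.1 (Fin.last n)).2
      simp only [partialSum_last] at hle
      lia⟩)
    fun _ _ hij ↦ strictMono_add_partialSum (fun i ↦ w.1 i) w.2 hij
  invFun v := ⟨fun i ↦ ⟨v i - Fin.partialSum step i, by
      have hle := monotone_sub_partialSum hstep (v := fun i ↦ v i) v.strictMono (Fin.le_last i)
      have hlast := (v (Fin.last n)).2
      have hsum := (partialSum_le_val hstep (Fin.last n)).trans
        (val_le_of_strictMono (f := fun i ↦ v i) v.strictMono _)
      simp only [partialSum_last] at hle hsum
      lia⟩, fun j ↦ by
      have hlt : (v j.castSucc : ℕ) < v j.succ := v.strictMono Fin.castSucc_lt_succ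
      have hle := (partialSum_le_val hstep j.castSucc).trans
        (val_le_of_strictMono (f := fun i ↦ v i) v.strictMono _)
      simp only [Fin.partialSum_succ]
      lia⟩
  left_inv w := by
    ext i
    exact add_tsub_cancel_right _ _
  right_inv v := by
    ext i
    exact Nat.sub_add_cancel ((partialSum_le_val hstep i).trans
      (val_le_of_strictMono (f := fun i ↦ v i) v.strictMono i))

end WordsWithPrescribedSteps

section Compatible

variable {n : ℕ}

lemma descents_eq_card_filter (π : Equiv.Perm (Fin (n + 1))) :
    descents π = #{j : Fin n | π j.succ < π j.castSucc} := by
  symm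
  refine card_bij (fun j _ ↦ j.castSucc) ?_ (fun _ _ _ _ h ↦ Fin.castSucc_injective _ h) ?_
  · intro j hj
    simpa [Fin.succ] using hj
  · intro i hi
    obtain ⟨h, hlt⟩ := (mem_filter.1 hi).2
    exact ⟨⟨i, by lia⟩, by simpa using hlt, rfl⟩

lemma sum_ascents (π : Equiv.Perm (Fin (n + 1))) :
    ∑ j : Fin n, (if π j.succ < π j.castSucc then 0 else 1) = n - descents π := by
  have hsum : ∑ j : Fin n, (if π j.succ < π j.castSucc then 0 else 1) =
      #{j : Fin n | ¬ π j.succ < π j.castSucc} := by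
    rw [card_filter]
    exact sum_congr rfl fun j _ ↦ by split_ifs <;> simp_all
  have hcard := card_filter_add_card_filter_not (s := (univ : Finset (Fin n)))
    fun j ↦ π j.succ < π j.castSucc
  rw [← descents_eq_card_filter, card_univ, Fintype.card_fin] at hcard
  rw [hsum]
  lia

lemma descents_le (π : Equiv.Perm (Fin (n + 1))) : descents π ≤ n := by
  rw [descents_eq_card_filter]
  exact (card_le_univ _).trans_eq (Fintype.card_fin n)

lemma isCompatible_iff_forall_lt_add {s : ℕ} (π : Equiv.Perm (Fin (n + 1)))
    (w : Fin (n + 1) → Fin s) :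
    IsCompatible π w ↔ ∀ j : Fin n,
      (w j.castSucc : ℕ) < w j.succ + if π j.succ < π j.castSucc then 0 else 1 := by
  refine Fin.strictMono_iff_lt_succ.trans (forall_congr' fun j ↦ ?_)
  have hne : π j.castSucc ≠ π j.succ := π.injective.ne Fin.castSucc_lt_succ.ne
  rw [Prod.Lex.toLex_lt_toLex, Fin.lt_def, Fin.ext_iff]
  split_ifs with hdesc
  · simp [hdesc.not_gt]
  · simp only [(not_lt.1 hdesc).lt_of_ne hne, and_true]
    lia

lemma card_isCompatible (s : ℕ) (π : Equiv.Perm (Fin (n + 1))) :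
    Nat.card {w : Fin (n + 1) → Fin s // IsCompatible π w} =
      (s + n - descents π).choose (n + 1) := by
  have hstep (j : Fin n) : (if π j.succ < π j.castSucc then 0 else 1) ≤ 1 := by
    split_ifs <;> simp
  rw [Nat.card_congr ((Equiv.subtypeEquivRight (isCompatible_iff_forall_lt_add π)).trans
      (wordsWithStepsEquiv hstep)), Nat.card_congr Set.powersetCard.ofFinEmbEquiv,
    Set.powersetCard.card, Nat.card_fin, sum_ascents, Nat.add_sub_assoc (descents_le π)]

end Compatible

/-! ### Involutions with compatible words and symmetric multisets of pairs -/

section Tuples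

variable {n : ℕ} {β : Type*}

lemma exists_tuple_of_card_eq {M : Multiset β} (hM : M.card = n) :
    ∃ f : Fin n → β, univ.val.map f = M := by
  induction M using Quotient.inductionOn with
  | h l =>
    obtain rfl : l.length = n := hM
    exact ⟨l.get, by rw [Fin.univ_val_map, List.ofFn_get]; rfl⟩

lemma map_univ_val_comp_perm (f : Fin n → β) (σ : Equiv.Perm (Fin n)) :
    univ.val.map (f ∘ σ) = univ.val.map f := by
  rw [← Multiset.map_map, Multiset.map_univ_val_equiv]

variable [LinearOrder β]

lemma exists_monotone_tuple_of_card_eq {M : Multiset β} (hM : M.card = n) :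
    ∃ f : Fin n → β, Monotone f ∧ univ.val.map f = M := by
  obtain ⟨f, rfl⟩ := exists_tuple_of_card_eq hM
  exact ⟨f ∘ Tuple.sort f, Tuple.monotone_sort f, map_univ_val_comp_perm f _⟩

lemma eq_of_monotone_of_map_univ_val_eq {f g : Fin n → β} (hf : Monotone f) (hg : Monotone g)
    (hfg : univ.val.map f = univ.val.map g) : f = g := by
  rw [Fin.univ_val_map, Fin.univ_val_map, Multiset.coe_eq_coe] at hfg
  exact List.ofFn_inj.1 (hfg.eq_of_sortedLE hf.sortedLE_ofFn hg.sortedLE_ofFn)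

end Tuples

section PairMultiset

variable {n : ℕ} {α : Type*}

/-- The pairs `(w i, w (π i))`; for an involution `π` this is a multiset invariant under swapping,
i.e. a symmetric matrix of natural numbers. -/
def pairMultiset (π : Equiv.Perm (Fin n)) (w : Fin n → α) : Multiset (α × α) :=
  univ.val.map fun i ↦ (w i, w (π i))

lemma apply_apply_of_mul_self_eq_one {π : Equiv.Perm (Fin n)} (hπ : π * π = 1)
    (i : Fin n) : π (π i) = i := by
  rw [← Equiv.Perm.mul_apply, hπ, Equiv.Perm.one_apply]

lemma map_swap_pairMultiset {π : Equiv.Perm (Fin n)} (hπ : π * π = 1) (w : Fin n → α) :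
    (pairMultiset π w).map Prod.swap = pairMultiset π w := by
  have hswap : (Prod.swap ∘ fun i ↦ (w i, w (π i))) = (fun i ↦ (w i, w (π i))) ∘ π := by
    funext i
    simp [apply_apply_of_mul_self_eq_one hπ]
  rw [pairMultiset, Multiset.map_map, hswap, map_univ_val_comp_perm]

end PairMultiset

section CompatiblePairs

variable {n : ℕ} {α : Type*} [LinearOrder α] {π : Equiv.Perm (Fin n)} {w : Fin n → α}

lemma isCompatible_iff :
    IsCompatible π w ↔ Monotone w ∧ ∀ i j, i < j → w i = w j → π i < π j := by
  constructor
  · refine fun h ↦ ⟨Prod.Lex.monotone_fst_ofLex.comp h.monotone, fun i j hij hw ↦ ?_⟩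
    exact ((Prod.Lex.toLex_lt_toLex.1 (h hij)).resolve_left hw.not_lt).2
  · rintro ⟨hmono, hlt⟩ i j hij
    refine Prod.Lex.toLex_lt_toLex.2 ((hmono hij.le).lt_or_eq.imp id fun hw ↦ ⟨hw, ?_⟩)
    exact hlt i j hij hw

lemma monotone_toLex_iff {f g : Fin n → α} :
    (Monotone fun i ↦ toLex (f i, g i)) ↔
      Monotone f ∧ ∀ i j, i < j → f i = f j → g i ≤ g j := by
  constructor
  · refine fun h ↦ ⟨Prod.Lex.monotone_fst_ofLex.comp h, fun i j hij hf ↦ ?_⟩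
    exact ((Prod.Lex.toLex_le_toLex.1 (h hij.le)).resolve_left hf.not_lt).2
  · rintro ⟨hmono, hle⟩ i j hij
    obtain hij | rfl := hij.lt_or_eq
    · refine Prod.Lex.toLex_le_toLex.2 ((hmono hij.le).lt_or_eq.imp id fun hf ↦ ⟨hf, ?_⟩)
      exact hle i j hij hf
    · exact le_rfl

lemma IsCompatible.eq_sort (h : IsCompatible π w) (hπ : π * π = 1) : π = Tuple.sort (w ∘ π) := by
  obtain ⟨hmono, hlt⟩ := isCompatible_iff.1 h
  simpa [Tuple.eq_sort_iff, Function.comp_def, apply_apply_of_mul_self_eq_one hπ] using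
    ⟨hmono, hlt⟩

lemma IsCompatible.monotone_pairs (h : IsCompatible π w) :
    Monotone fun i ↦ toLex (w i, w (π i)) := by
  obtain ⟨hmono, hlt⟩ := isCompatible_iff.1 h
  exact monotone_toLex_iff.2 ⟨hmono, fun i j hij hw ↦ hmono (hlt i j hij hw).le⟩

lemma IsCompatible.ext_pairMultiset {π' : Equiv.Perm (Fin n)} {w' : Fin n → α}
    (h : IsCompatible π w) (h' : IsCompatible π' w') (hπ : π * π = 1) (hπ' : π' * π' = 1)
    (heq : pairMultiset π w = pairMultiset π' w') : π = π' ∧ w = w' := by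
  have hpairs := eq_of_monotone_of_map_univ_val_eq h.monotone_pairs h'.monotone_pairs
    (by simpa only [pairMultiset, Multiset.map_map, Function.comp_def] using
      congrArg (Multiset.map toLex) heq)
  have hfst : w = w' := funext fun i ↦ congrArg (fun p ↦ (ofLex p).1) (congrFun hpairs i)
  have hsnd : w ∘ π = w' ∘ π' :=
    funext fun i ↦ congrArg (fun p ↦ (ofLex p).2) (congrFun hpairs i)
  exact ⟨by rw [h.eq_sort hπ, h'.eq_sort hπ', hsnd], hfst⟩

end CompatiblePairs

section Reconstruction

variable {n : ℕ} {α : Type*} [LinearOrder α] {u v : Fin n → α}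

lemma sort_lt_sort {i j : Fin n} (hij : i < j) (hu : u (Tuple.sort u i) = u (Tuple.sort u j)) :
    Tuple.sort u i < Tuple.sort u j :=
  (Tuple.eq_sort_iff.1 rfl).2 i j hij hu

-- Sorting the pairs `(v i, u i)` by second coordinate amounts to swapping the coordinates.
lemma comp_sort_of_swap_invariant (hmono : Monotone fun i ↦ toLex (v i, u i))
    (hswap : univ.val.map (fun i ↦ (u i, v i)) = univ.val.map fun i ↦ (v i, u i)) :
    u ∘ Tuple.sort u = v ∧ v ∘ Tuple.sort u = u := by
  set σ := Tuple.sort u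
  have hsorted : Monotone fun i ↦ toLex (u (σ i), v (σ i)) :=
    monotone_toLex_iff.2 ⟨Tuple.monotone_sort u, fun i j hij huij ↦
      (monotone_toLex_iff.1 hmono).1 (sort_lt_sort hij huij).le⟩
  have hmap : univ.val.map (fun i ↦ toLex (u (σ i), v (σ i))) =
      univ.val.map fun i ↦ toLex (v i, u i) := by
    have := congrArg (Multiset.map toLex) ((map_univ_val_comp_perm _ σ).trans hswap)
    simpa only [Multiset.map_map, Function.comp_def] using this
  have hpairs := eq_of_monotone_of_map_univ_val_eq hsorted hmono hmap
  exact ⟨funext fun i ↦ congrArg (fun p ↦ (ofLex p).1) (congrFun hpairs i),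
    funext fun i ↦ congrArg (fun p ↦ (ofLex p).2) (congrFun hpairs i)⟩

lemma sort_mul_self (hmono : Monotone fun i ↦ toLex (v i, u i))
    (huv : u ∘ Tuple.sort u = v) (hvu : v ∘ Tuple.sort u = u) :
    Tuple.sort u * Tuple.sort u = 1 := by
  set σ := Tuple.sort u with hσ
  obtain ⟨hv, hle⟩ := monotone_toLex_iff.1 hmono
  have hu_symm (i : Fin n) : u (σ.symm i) = v i := by simp [← congrFun hvu]
  have hv_symm (i : Fin n) : v (σ.symm i) = u i := by simp [← congrFun huv]
  suffices hsymm : σ.symm = σ by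
    rw [mul_eq_one_iff_eq_inv]
    exact hsymm.symm
  refine Tuple.eq_sort_iff.2 ⟨?_, fun i j hij heq ↦ ?_⟩
  · simpa only [Function.comp_def, hu_symm] using hv
  · rw [hu_symm, hu_symm] at heq
    obtain hlt | hueq := (hle i j hij heq).lt_or_eq
    · rw [← hv_symm, ← hv_symm] at hlt
      exact hv.reflect_lt hlt
    · by_contra! hge
      have hne : σ.symm j ≠ σ.symm i := σ.symm.injective.ne hij.ne'
      have hji := sort_lt_sort (u := u) (hge.lt_of_ne hne) (by simpa [← hσ] using hueq.symm)
      rw [← hσ, Equiv.apply_symm_apply, Equiv.apply_symm_apply] at hji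
      exact hji.not_gt hij

lemma exists_isCompatible_of_swap_invariant {M : Multiset (α × α)} (hcard : M.card = n)
    (hswap : M.map Prod.swap = M) :
    ∃ (π : Equiv.Perm (Fin n)) (w : Fin n → α),
      π * π = 1 ∧ IsCompatible π w ∧ pairMultiset π w = M := by
  obtain ⟨p, hp, hpM⟩ := exists_monotone_tuple_of_card_eq (M := M.map toLex)
    ((Multiset.card_map _ _).trans hcard)
  set v : Fin n → α := fun i ↦ (ofLex (p i)).1
  set u : Fin n → α := fun i ↦ (ofLex (p i)).2
  have hvu : univ.val.map (fun i ↦ (v i, u i)) = M := by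
    simpa only [Multiset.map_map, Function.comp_def, ofLex_toLex, Multiset.map_id'] using
      congrArg (Multiset.map ofLex) hpM
  have huv : univ.val.map (fun i ↦ (u i, v i)) = M := by
    simpa only [Multiset.map_map, Function.comp_def, Prod.swap_prod_mk, hswap] using
      congrArg (Multiset.map Prod.swap) hvu
  obtain ⟨hsort, hsort'⟩ := comp_sort_of_swap_invariant (u := u) (v := v) hp (huv.trans hvu.symm)
  refine ⟨Tuple.sort u, v, sort_mul_self hp hsort hsort', isCompatible_iff.2 ⟨?_, ?_⟩, ?_⟩
  · exact hsort ▸ Tuple.monotone_sort u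
  · intro i j hij hvij
    rw [← hsort] at hvij
    exact sort_lt_sort hij hvij
  · simpa [pairMultiset, ← congrFun hsort'] using hvu

end Reconstruction

/-- Involutions of `Fin n` together with a compatible word over `α`. -/
abbrev InvolutionWord (n : ℕ) (α : Type*) [LinearOrder α] : Type _ :=
  {p : Equiv.Perm (Fin n) × (Fin n → α) // p.1 * p.1 = 1 ∧ IsCompatible p.1 p.2}

lemma card_involutionWord (n : ℕ) (α : Type*) [LinearOrder α] :
    Nat.card (InvolutionWord n α) =
      Nat.card {M : Multiset (α × α) // M.card = n ∧ M.map Prod.swap = M} := by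
  refine Nat.card_eq_of_bijective (fun p ↦ ⟨pairMultiset p.1.1 p.1.2, ?_,
    map_swap_pairMultiset p.2.1 p.1.2⟩) ⟨fun p q hpq ↦ ?_, fun M ↦ ?_⟩
  · simp [pairMultiset]
  · obtain ⟨hperm, hword⟩ :=
      p.2.2.ext_pairMultiset q.2.2 p.2.1 q.2.1 (congrArg Subtype.val hpq)
    exact Subtype.ext (Prod.ext hperm hword)
  · obtain ⟨π, w, hπ, hw, hM⟩ := exists_isCompatible_of_swap_invariant M.2.1 M.2.2
    exact ⟨⟨(π, w), hπ, hw⟩, Subtype.ext hM⟩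

lemma card_involutionWord_fin (n s : ℕ) :
    Nat.card (InvolutionWord (n + 1) (Fin s)) =
      ∑ π ∈ involutions (n + 1), (s + n - descents π).choose (n + 1) := by
  let e : InvolutionWord (n + 1) (Fin s) ≃
      Σ π : involutions (n + 1), {w : Fin (n + 1) → Fin s // IsCompatible π.1 w} :=
    { toFun := fun p ↦ ⟨⟨p.1.1, mem_filter.2 ⟨mem_univ _, p.2.1⟩⟩, ⟨p.1.2, p.2.2⟩⟩
      invFun := fun q ↦ ⟨(q.1.1, q.2.1), (mem_filter.1 q.1.2).2, q.2.2⟩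
      left_inv := fun _ ↦ rfl
      right_inv := fun _ ↦ rfl }
  rw [Nat.card_congr e, Nat.card_sigma]
  simp only [card_isCompatible]
  exact sum_coe_sort (involutions (n + 1)) fun π ↦ (s + n - descents π).choose (n + 1)

/-! ### Counting symmetric multisets of pairs -/

lemma map_swap_eq_self_iff {α : Type*} [DecidableEq α] {M : Multiset (α × α)} :
    M.map Prod.swap = M ↔ ∀ a b, M.count (a, b) = M.count (b, a) := by
  have hcount (a b : α) : (M.map Prod.swap).count (a, b) = M.count (b, a) :=
    Multiset.count_map_eq_count' Prod.swap M Prod.swap_injective (b, a)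
  refine ⟨fun h a b ↦ by rw [← hcount, h], fun h ↦ Multiset.ext.2 fun ⟨a, b⟩ ↦ ?_⟩
  rw [hcount, h]

section SymmetricMultisets

variable {α : Type*} [Fintype α]

/-- The symmetric multiset of pairs with prescribed multiplicity on each unordered pair. -/
def symmetricMultiset (f : Sym2 α → ℕ) : Multiset (α × α) :=
  ∑ p : α × α, Multiset.replicate (f s(p.1, p.2)) p

variable [DecidableEq α]

/-- The number of ordered pairs representing an unordered pair: `1` on the diagonal, `2` off it. -/
def orderings (z : Sym2 α) : ℕ :=
  #{p : α × α | s(p.1, p.2) = z}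

lemma orderings_of_isDiag {z : Sym2 α} (hz : z.IsDiag) : orderings z = 1 := by
  induction z using Sym2.inductionOn with
  | hf a b =>
    obtain rfl : a = b := hz
    refine card_eq_one.2 ⟨(a, a), ?_⟩
    ext ⟨c, d⟩
    simp

lemma orderings_of_not_isDiag {z : Sym2 α} (hz : ¬ z.IsDiag) : orderings z = 2 := by
  induction z using Sym2.inductionOn with
  | hf a b =>
    refine card_eq_two.2 ⟨(a, b), (b, a), fun h ↦ hz (congrArg Prod.fst h), ?_⟩
    ext ⟨c, d⟩
    simp

lemma count_symmetricMultiset (f : Sym2 α → ℕ) (p : α × α) :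
    (symmetricMultiset f).count p = f s(p.1, p.2) := by
  simp [symmetricMultiset, Multiset.count_sum', Multiset.count_replicate]

lemma card_symmetricMultiset (f : Sym2 α → ℕ) :
    (symmetricMultiset f).card = ∑ z, orderings z * f z := by
  rw [symmetricMultiset, Multiset.card_sum]
  simp only [Multiset.card_replicate, orderings]
  rw [← sum_fiberwise' univ (fun p : α × α ↦ s(p.1, p.2)) f]
  simp

lemma card_swap_invariant_multisets (n : ℕ) :
    Nat.card {M : Multiset (α × α) // M.card = n ∧ M.map Prod.swap = M} =
      Nat.card {f : Sym2 α → ℕ // ∑ z, orderings z * f z = n} := by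
  symm
  refine Nat.card_eq_of_bijective (fun f ↦ ⟨symmetricMultiset f.1, ?_, ?_⟩) ⟨?_, ?_⟩
  · rw [card_symmetricMultiset, f.2]
  · simp only [map_swap_eq_self_iff, count_symmetricMultiset, Sym2.eq_swap, implies_true]
  · refine fun f g hfg ↦ Subtype.ext (funext fun z ↦ ?_)
    induction z using Sym2.inductionOn with
    | hf a b =>
      simpa [count_symmetricMultiset] using
        congrArg (fun M ↦ Multiset.count (a, b) M.1) hfg
  · rintro ⟨M, hcard, hswap⟩
    let f : Sym2 α → ℕ := Sym2.lift ⟨fun a b ↦ M.count (a, b), map_swap_eq_self_iff.1 hswap⟩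
    have hf : symmetricMultiset f = M :=
      Multiset.ext.2 fun p ↦ (count_symmetricMultiset f p).trans rfl
    exact ⟨⟨f, by rw [← card_symmetricMultiset, hf, hcard]⟩, Subtype.ext hf⟩

end SymmetricMultisets

section GeneratingFunction

open PowerSeries

/-- The power series `1 / (1 - X ^ d)` for `d > 0`. -/
noncomputable def geomSeries (d : ℕ) : PowerSeries ℝ :=
  PowerSeries.mk fun k ↦ if d ∣ k then 1 else 0

lemma geomSeries_mul {d : ℕ} (hd : 0 < d) : geomSeries d * (1 - X ^ d) = 1 := by
  ext k
  rw [mul_sub, mul_one, map_sub, coeff_mul_X_pow', coeff_one]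
  simp only [geomSeries, coeff_mk]
  rcases Nat.eq_zero_or_pos k with rfl | hk
  · simp [hd.ne']
  · by_cases hdk : d ≤ k
    · simp [hdk, hk.ne', Nat.dvd_sub_iff_left hdk dvd_rfl]
    · simp [hdk, hk.ne', Nat.not_dvd_of_pos_of_lt hk (not_le.1 hdk)]

lemma coeff_prod_geomSeries {ι : Type*} [Fintype ι] {d : ι → ℕ} (hd : ∀ i, 0 < d i) (n : ℕ) :
    coeff n (∏ i, geomSeries (d i)) = Nat.card {f : ι → ℕ // ∑ i, d i * f i = n} := by
  classical
  have hcoeff : coeff n (∏ i, geomSeries (d i)) =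
      #{l ∈ (univ : Finset ι).finsuppAntidiag n | ∀ i, d i ∣ l i} := by
    rw [coeff_prod, card_filter, Nat.cast_sum]
    refine sum_congr rfl fun l _ ↦ ?_
    simp [geomSeries, prod_ite_zero]
  rw [hcoeff, ← Nat.card_eq_finsetCard, Nat.cast_inj]
  symm
  refine Nat.card_eq_of_bijective
    (fun f ↦ ⟨Finsupp.equivFunOnFinite.symm fun i ↦ d i * f.1 i, ?_⟩) ⟨fun f g hfg ↦ ?_, ?_⟩
  · simp [mem_finsuppAntidiag, f.2]
  · refine Subtype.ext (funext fun i ↦ Nat.eq_of_mul_eq_mul_left (hd i) ?_)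
    simpa using DFunLike.congr_fun (congrArg Subtype.val hfg) i
  · rintro ⟨l, hl⟩
    obtain ⟨hsum, hdvd⟩ := mem_filter.1 hl
    choose f hf using hdvd
    refine ⟨⟨f, ?_⟩, Subtype.ext (Finsupp.ext fun i ↦ (hf i).symm)⟩
    simpa only [← hf] using (mem_finsuppAntidiag.1 hsum).1

/-- The generating function of swap-invariant multisets of pairs over an `s`-letter alphabet,
`1 / ((1 - X) ^ s * (1 - X ^ 2) ^ (s choose 2))`. -/
noncomputable def symmetricSeries (s : ℕ) : PowerSeries ℝ :=
  geomSeries 1 ^ s * geomSeries 2 ^ s.choose 2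

lemma prod_geomSeries_orderings (s : ℕ) :
    ∏ z : Sym2 (Fin s), geomSeries (orderings z) = symmetricSeries s := by
  have hdiag : #{z : Sym2 (Fin s) | z.IsDiag} = s := by
    rw [← Fintype.card_subtype, Sym2.card_subtype_diag, Fintype.card_fin]
  have hoff : #{z : Sym2 (Fin s) | ¬ z.IsDiag} = s.choose 2 := by
    rw [← Fintype.card_subtype, Sym2.card_subtype_not_diag, Fintype.card_fin]
  rw [← prod_filter_mul_prod_filter_not univ Sym2.IsDiag, symmetricSeries]
  congr 1
  · rw [prod_congr rfl fun z hz ↦ congrArg geomSeries (orderings_of_isDiag (mem_filter.1 hz).2),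
      prod_const, hdiag]
  · rw [prod_congr rfl fun z hz ↦ congrArg geomSeries
      (orderings_of_not_isDiag (mem_filter.1 hz).2), prod_const, hoff]

lemma coeff_symmetricSeries (n s : ℕ) :
    coeff n (symmetricSeries s) =
      Nat.card {M : Multiset (Fin s × Fin s) // M.card = n ∧ M.map Prod.swap = M} := by
  have hpos (z : Sym2 (Fin s)) : 0 < orderings z := by
    by_cases hz : z.IsDiag
    · simp [orderings_of_isDiag hz]
    · simp [orderings_of_not_isDiag hz]
  rw [card_swap_invariant_multisets, ← coeff_prod_geomSeries hpos, prod_geomSeries_orderings]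

lemma symmetricSeries_mul (s : ℕ) :
    symmetricSeries s * ((1 - X) ^ s * (1 - X ^ 2) ^ s.choose 2) = 1 := by
  have hone : geomSeries 1 * (1 - X) = 1 := by simpa using geomSeries_mul one_pos
  rw [symmetricSeries, mul_mul_mul_comm, ← mul_pow, ← mul_pow, geomSeries_mul two_pos,
    hone, one_pow, one_pow, one_mul]

lemma mul_derivative_pow (u : PowerSeries ℝ) (k : ℕ) :
    u * d⁄dX ℝ (u ^ k) = k * u ^ k * d⁄dX ℝ u := by
  rw [Derivation.leibniz_pow, nsmul_eq_mul, smul_eq_mul]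
  cases k with
  | zero => simp
  | succ k => rw [Nat.add_sub_cancel]; ring

lemma one_sub_sq_mul_derivative_denominator (s : ℕ) :
    (1 - X ^ 2) * d⁄dX ℝ ((1 - X) ^ s * (1 - X ^ 2) ^ s.choose 2) =
      -((C (s : ℝ) + C ((s : ℝ) ^ 2) * X) * ((1 - X) ^ s * (1 - X ^ 2) ^ s.choose 2)) := by
  set u : PowerSeries ℝ := 1 - X
  set v : PowerSeries ℝ := 1 - X ^ 2
  have hfactor : v = u * (1 + X) := by ring
  have hu := mul_derivative_pow u s
  have hv := mul_derivative_pow v (s.choose 2)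
  have hdu : d⁄dX ℝ u = -1 := by simp [u]
  have hdv : d⁄dX ℝ v = -(2 * X) := by simp [v, Derivation.leibniz_pow]
  have hchoose : 2 * (s.choose 2 : PowerSeries ℝ) = C ((s : ℝ) ^ 2) - C (s : ℝ) := by
    rw [← map_natCast C, ← map_ofNat C 2, ← map_mul, ← map_sub, Nat.cast_choose_two]
    ring_nf
  have hs : (s : PowerSeries ℝ) = C (s : ℝ) := (map_natCast C s).symm
  rw [hdu, hs] at hu
  rw [hdv] at hv
  rw [Derivation.leibniz, smul_eq_mul, smul_eq_mul]
  linear_combination u ^ s * hv + v ^ s.choose 2 * (1 + X) * hu +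
    v ^ s.choose 2 * d⁄dX ℝ (u ^ s) * hfactor - X * u ^ s * v ^ s.choose 2 * hchoose

lemma one_sub_sq_mul_derivative_symmetricSeries (s : ℕ) :
    (1 - X ^ 2) * d⁄dX ℝ (symmetricSeries s) =
      (C (s : ℝ) + C ((s : ℝ) ^ 2) * X) * symmetricSeries s := by
  set G := symmetricSeries s
  set D : PowerSeries ℝ := (1 - X) ^ s * (1 - X ^ 2) ^ s.choose 2
  have hGD : G * D = 1 := symmetricSeries_mul s
  have hD : (1 - X ^ 2) * d⁄dX ℝ D = -((C (s : ℝ) + C ((s : ℝ) ^ 2) * X) * D) :=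
    one_sub_sq_mul_derivative_denominator s
  have hderiv : G * d⁄dX ℝ D + D * d⁄dX ℝ G = 0 := by
    simpa [Derivation.leibniz] using congrArg (d⁄dX ℝ) hGD
  refine mul_right_cancel₀ (right_ne_zero_of_mul_eq_one hGD) ?_
  linear_combination (1 - X ^ 2) * hderiv - G * hD

lemma constantCoeff_symmetricSeries (s : ℕ) : constantCoeff (symmetricSeries s) = 1 := by
  simpa using congrArg constantCoeff (symmetricSeries_mul s)

lemma coeff_one_symmetricSeries (s : ℕ) : coeff 1 (symmetricSeries s) = s := by
  have hderiv : constantCoeff (d⁄dX ℝ (symmetricSeries s)) = coeff 1 (symmetricSeries s) := by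
    rw [← coeff_zero_eq_constantCoeff_apply, coeff_derivative]
    simp
  simpa [hderiv, constantCoeff_symmetricSeries] using
    congrArg constantCoeff (one_sub_sq_mul_derivative_symmetricSeries s)

lemma coeff_symmetricSeries_add_two (n s : ℕ) :
    (n + 2) * coeff (n + 2) (symmetricSeries s) =
      s * coeff (n + 1) (symmetricSeries s) + ((s : ℝ) ^ 2 + n) * coeff n (symmetricSeries s) := by
  have hX (F : PowerSeries ℝ) : coeff (n + 1) (X ^ 2 * d⁄dX ℝ F) = n * coeff n F := by
    cases n with
    | zero => simp [coeff_X_pow_mul']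
    | succ n =>
      rw [coeff_X_pow_mul', if_pos (by lia), show n + 1 + 1 - 2 = n by lia, coeff_derivative]
      push_cast
      ring
  have h := congrArg (coeff (n + 1)) (one_sub_sq_mul_derivative_symmetricSeries s)
  rw [sub_mul, one_mul, map_sub, hX, coeff_derivative, add_mul, map_add, mul_assoc, coeff_C_mul,
    coeff_C_mul, coeff_succ_X_mul] at h
  push_cast at h
  linarith

end GeneratingFunction

section CountPolynomial

open Polynomial

/-- The polynomial in `s` counting swap-invariant multisets of `n` pairs over `s` letters. -/
noncomputable def countPoly : ℕ → ℝ[X]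
  | 0 => 1
  | 1 => X
  | n + 2 => C ((n + 2 : ℝ)⁻¹) * (X * countPoly (n + 1) + (X ^ 2 + C (n : ℝ)) * countPoly n)

lemma eval_countPoly_add_two (n : ℕ) (x : ℝ) :
    (n + 2) * (countPoly (n + 2)).eval x =
      x * (countPoly (n + 1)).eval x + (x ^ 2 + n) * (countPoly n).eval x := by
  have hn : (n + 2 : ℝ) ≠ 0 := by positivity
  simp [countPoly, hn]

lemma coeff_symmetricSeries_eq_eval (n s : ℕ) :
    PowerSeries.coeff n (symmetricSeries s) = (countPoly n).eval (s : ℝ) := by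
  induction n using Nat.twoStepInduction with
  | zero => simp [countPoly, constantCoeff_symmetricSeries]
  | one => simp [countPoly, coeff_one_symmetricSeries]
  | more n ih ih' =>
    have hn : (n + 2 : ℝ) ≠ 0 := by positivity
    refine mul_left_cancel₀ hn ?_
    rw [coeff_symmetricSeries_add_two, eval_countPoly_add_two, ih, ih']

lemma sum_choose_descents_eq_eval (n s : ℕ) :
    ∑ π ∈ involutions (n + 1), ((s + n - descents π).choose (n + 1) : ℝ) =
      (countPoly (n + 1)).eval (s : ℝ) := by
  rw [← coeff_symmetricSeries_eq_eval, coeff_symmetricSeries, ← card_involutionWord,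
    card_involutionWord_fin, Nat.cast_sum]

end CountPolynomial

/-! ### Coefficients of the counting polynomial -/

/-- `k!` times the coefficient of `X ^ k` in `countPoly n`. -/
noncomputable def scaledCoeff (n k : ℕ) : ℝ :=
  k.factorial * (countPoly n).coeff k

section ScaledCoeff

open Polynomial

lemma scaledCoeff_zero (k : ℕ) : scaledCoeff 0 k = if k = 0 then 1 else 0 := by
  simp only [scaledCoeff, countPoly, coeff_one]
  split_ifs with hk <;> simp [hk]

lemma scaledCoeff_one (k : ℕ) : scaledCoeff 1 k = if k = 1 then 1 else 0 := by
  simp only [scaledCoeff, countPoly, coeff_X, eq_comm (a := 1)]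
  split_ifs with hk <;> simp [hk]

-- Truncated subtraction is harmless: the prefactors vanish when `k < 1`, resp. `k < 2`.
lemma scaledCoeff_add_two (n k : ℕ) :
    (n + 2) * scaledCoeff (n + 2) k =
      k * scaledCoeff (n + 1) (k - 1) + k * (k - 1) * scaledCoeff n (k - 2) +
        n * scaledCoeff n k := by
  have hn : (n + 2 : ℝ) ≠ 0 := by positivity
  have hX : (X * countPoly (n + 1)).coeff k =
      if 1 ≤ k then (countPoly (n + 1)).coeff (k - 1) else 0 := by
    simpa using coeff_X_pow_mul' (countPoly (n + 1)) 1 k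
  rw [scaledCoeff, countPoly, coeff_C_mul, coeff_add, hX, add_mul (X ^ 2), coeff_add,
    coeff_X_pow_mul', coeff_C_mul, mul_left_comm, mul_inv_cancel_left₀ hn]
  rcases k with _ | _ | k
  · simp [scaledCoeff]
  · simp [scaledCoeff]
  · simp only [scaledCoeff, Nat.factorial_succ, Nat.add_sub_cancel,
      show k + 1 + 1 - 2 = k by lia, show 1 ≤ k + 1 + 1 by lia, show 2 ≤ k + 1 + 1 by lia, if_true]
    push_cast
    ring

lemma natDegree_countPoly_le (n : ℕ) : (countPoly n).natDegree ≤ n := by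
  induction n using Nat.twoStepInduction with
  | zero => simp [countPoly]
  | one => simp [countPoly]
  | more n ih ih' =>
    rw [countPoly]
    refine (natDegree_C_mul_le _ _).trans (natDegree_add_le_of_degree_le ?_ ?_)
    · exact (natDegree_mul_le_of_le natDegree_X_le ih').trans_eq (by lia)
    · exact (natDegree_mul_le_of_le (natDegree_X_pow_add_C.le) ih).trans_eq (by lia)

lemma scaledCoeff_eq_zero_of_lt {n k : ℕ} (h : n < k) : scaledCoeff n k = 0 := by
  rw [scaledCoeff, coeff_eq_zero_of_natDegree_lt ((natDegree_countPoly_le n).trans_lt h), mul_zero]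

lemma cast_mul_cast_sub_one_nonneg (k : ℕ) : (0 : ℝ) ≤ k * (k - 1) := by
  rcases k with _ | k
  · simp
  · rw [Nat.cast_succ, add_sub_cancel_right]
    positivity

lemma scaledCoeff_nonneg (n k : ℕ) : 0 ≤ scaledCoeff n k := by
  induction n using Nat.twoStepInduction generalizing k with
  | zero => rw [scaledCoeff_zero]; positivity
  | one => rw [scaledCoeff_one]; positivity
  | more n ih ih' =>
    have hn : (0 : ℝ) < n + 2 := by positivity
    refine nonneg_of_mul_nonneg_right ?_ hn
    rw [scaledCoeff_add_two]
    have := mul_nonneg (cast_mul_cast_sub_one_nonneg k) (ih (k - 2))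
    have := mul_nonneg k.cast_nonneg (ih' (k - 1))
    have := mul_nonneg n.cast_nonneg (ih k)
    linarith

lemma scaledCoeff_succ_zero (n : ℕ) : scaledCoeff (n + 1) 0 = 0 := by
  induction n using Nat.twoStepInduction with
  | zero => simp [scaledCoeff_one]
  | one => simpa using scaledCoeff_add_two 0 0
  | more n ih _ =>
    have hn : ((n + 1 : ℕ) + 2 : ℝ) ≠ 0 := by positivity
    refine (mul_eq_zero.1 ((scaledCoeff_add_two (n + 1) 0).trans ?_)).resolve_left hn
    simp [ih]

lemma scaledCoeff_self_add_two (n : ℕ) :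
    scaledCoeff (n + 2) (n + 2) = scaledCoeff (n + 1) (n + 1) + (n + 1) * scaledCoeff n n := by
  have hn : (n + 2 : ℝ) ≠ 0 := by positivity
  have h := scaledCoeff_add_two n (n + 2)
  rw [scaledCoeff_eq_zero_of_lt (by lia : n < n + 2), Nat.add_sub_cancel] at h
  refine mul_left_cancel₀ hn ?_
  push_cast at h
  linear_combination h

lemma scaledCoeff_self_pos (n : ℕ) : 0 < scaledCoeff n n := by
  induction n using Nat.twoStepInduction with
  | zero => simp [scaledCoeff_zero]
  | one => simp [scaledCoeff_one]
  | more n ih ih' =>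
    rw [scaledCoeff_self_add_two]
    positivity

/-- The coefficients of `exp (x ^ 2 / 2)`, which bound the ratios of the lower coefficients of
`countPoly` to the top one. -/
noncomputable def decayRate : ℕ → ℝ
  | 0 => 1
  | 1 => 0
  | j + 2 => decayRate j / (j + 2)

lemma decayRate_nonneg (j : ℕ) : 0 ≤ decayRate j := by
  induction j using Nat.twoStepInduction with
  | zero => simp [decayRate]
  | one => simp [decayRate]
  | more j ih _ =>
    rw [decayRate]
    positivity

lemma decayRate_two_mul (i : ℕ) : decayRate (2 * i) = (1 / 2) ^ i / i.factorial := by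
  induction i with
  | zero => simp [decayRate]
  | succ i ih =>
    rw [mul_add_one, decayRate, ih, pow_succ, Nat.factorial_succ]
    push_cast
    field_simp

lemma decayRate_two_mul_add_one (i : ℕ) : decayRate (2 * i + 1) = 0 := by
  induction i with
  | zero => simp [decayRate]
  | succ i ih => rw [show 2 * (i + 1) + 1 = 2 * i + 1 + 2 by ring, decayRate, ih, zero_div]

lemma decayRate_mul_eight_pow_le (j : ℕ) : decayRate j * 8 ^ j ≤ Real.exp 32 := by
  rcases Nat.even_or_odd' j with ⟨i, rfl | rfl⟩
  · calc decayRate (2 * i) * 8 ^ (2 * i) = 32 ^ i / i.factorial := by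
          rw [decayRate_two_mul, pow_mul, div_mul_eq_mul_div, ← mul_pow]
          norm_num
      _ ≤ Real.exp 32 := Real.pow_div_factorial_le_exp 32 (by norm_num) i
  · simp [decayRate_two_mul_add_one, Real.exp_nonneg]

lemma scaledCoeff_add_two_le {n k j : ℕ} (hkj : k + j = n + 2)
    (hfirst : k * scaledCoeff (n + 1) (k - 1) ≤ k * (decayRate j * scaledCoeff (n + 1) (n + 1)))
    (hsecond : k * (k - 1) * scaledCoeff n (k - 2) ≤ k * (k - 1) * (decayRate j * scaledCoeff n n))
    (hthird : scaledCoeff n k ≤ j * decayRate j * scaledCoeff n n) :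
    scaledCoeff (n + 2) k ≤ decayRate j * scaledCoeff (n + 2) (n + 2) := by
  have hn : (0 : ℝ) < n + 2 := by positivity
  have hcast : (k : ℝ) = n + 2 - j := by
    rw [eq_sub_iff_add_eq]
    exact_mod_cast hkj
  have hgap : 0 ≤ decayRate j * (j * scaledCoeff (n + 1) (n + 1) +
      j * (k + 1) * scaledCoeff n n) := by
    have := decayRate_nonneg j
    have := scaledCoeff_self_pos n
    have := scaledCoeff_self_pos (n + 1)
    positivity
  have hthird' := mul_le_mul_of_nonneg_left hthird n.cast_nonneg
  refine le_of_mul_le_mul_left ?_ hn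
  rw [scaledCoeff_add_two, scaledCoeff_self_add_two]
  rw [hcast] at hfirst hsecond hgap ⊢
  linarith

lemma scaledCoeff_le (n : ℕ) :
    ∀ k j, k + j = n → scaledCoeff n k ≤ decayRate j * scaledCoeff n n := by
  induction n using Nat.twoStepInduction with
  | zero =>
    intro k j hkj
    obtain ⟨rfl, rfl⟩ : k = 0 ∧ j = 0 := by lia
    simp [decayRate]
  | one =>
    intro k j hkj
    obtain ⟨rfl, rfl⟩ | ⟨rfl, rfl⟩ : k = 1 ∧ j = 0 ∨ k = 0 ∧ j = 1 := by lia
    · simp [decayRate]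
    · simp [decayRate, scaledCoeff_one]
  | more n ih ih' =>
    intro k j hkj
    refine scaledCoeff_add_two_le hkj ?_ ?_ ?_
    · rcases k with _ | k
      · simp
      · exact mul_le_mul_of_nonneg_left (ih' k j (by lia)) (Nat.cast_nonneg _)
    · rcases k with _ | _ | k
      · simp
      · simp
      · exact mul_le_mul_of_nonneg_left (ih k j (by lia)) (cast_mul_cast_sub_one_nonneg _)
    · rcases j with _ | _ | j
      · simp [scaledCoeff_eq_zero_of_lt (by lia : n < k)]
      · simp [scaledCoeff_eq_zero_of_lt (by lia : n < k), decayRate]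
      · refine (ih k j (by lia)).trans_eq ?_
        rw [decayRate]
        push_cast
        field_simp
        ring

lemma scaledCoeff_succ_self (n : ℕ) : scaledCoeff (n + 1) n = 0 :=
  le_antisymm (by simpa [decayRate] using scaledCoeff_le (n + 1) n 1 rfl) (scaledCoeff_nonneg _ _)

end ScaledCoeff

/-! ### Averaging operators -/

section Smoothing

/-- The operator sending `g` to `x ↦ ∫ ω u * g (x + u)` over `u ∈ [-1/2, 1/2]`: for a probability
density `ω`, the mean of `g` around `x` under a random shift of density `ω`. -/
noncomputable def smoothing (ω : C(ℝ, ℝ)) : Module.End ℝ C(ℝ, ℝ) where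
  toFun g := ⟨fun x ↦ ∫ u in (-1 / 2 : ℝ)..(1 / 2), ω u * g (x + u),
    intervalIntegral.continuous_parametric_intervalIntegral_of_continuous' (by fun_prop) _ _⟩
  map_add' g g' := by
    ext x
    simp only [ContinuousMap.coe_mk, ContinuousMap.add_apply, mul_add]
    exact intervalIntegral.integral_add (Continuous.intervalIntegrable (by fun_prop) _ _)
      (Continuous.intervalIntegrable (by fun_prop) _ _)
  map_smul' c g := by
    ext x
    simp only [ContinuousMap.coe_mk, ContinuousMap.smul_apply, smul_eq_mul, RingHom.id_apply,
      mul_left_comm (_ : ℝ) c, intervalIntegral.integral_const_mul]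

/-- Averaging over an interval of length one, so that `unitAverage ^ n` averages against the
Irwin–Hall law of a sum of `n` uniform variables on `[-1/2, 1/2]`. -/
noncomputable def unitAverage : Module.End ℝ C(ℝ, ℝ) := smoothing 1

/-- The translation operator `g ↦ g (· + a)`. -/
def translation (a : ℝ) : Module.End ℝ C(ℝ, ℝ) where
  toFun g := ⟨fun x ↦ g (x + a), by fun_prop⟩
  map_add' _ _ := rfl
  map_smul' _ _ := rfl

/-- The density on `[-1/2, 1/2]` of the zero-bias transform of the uniform law there. -/
noncomputable def zeroBiasKernel : C(ℝ, ℝ) := ⟨fun u ↦ 6 * (1 / 4 - u ^ 2), by fun_prop⟩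

/-- `ω` is a probability density on `[-1/2, 1/2]`. -/
structure IsKernel (ω : C(ℝ, ℝ)) : Prop where
  nonneg : ∀ u ∈ Set.Icc (-1 / 2 : ℝ) (1 / 2), 0 ≤ ω u
  integral_eq_one : ∫ u in (-1 / 2 : ℝ)..(1 / 2), ω u = 1

lemma isKernel_one : IsKernel 1 where
  nonneg _ _ := zero_le_one
  integral_eq_one := by
    simp only [ContinuousMap.one_apply, intervalIntegral.integral_const, smul_eq_mul]
    norm_num

lemma isKernel_zeroBiasKernel : IsKernel zeroBiasKernel where
  nonneg u hu := by
    rw [zeroBiasKernel, ContinuousMap.coe_mk]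
    nlinarith [hu.1, hu.2]
  integral_eq_one := by
    simp only [zeroBiasKernel, ContinuousMap.coe_mk]
    rw [intervalIntegral.integral_const_mul, intervalIntegral.integral_sub (by simp)
      ((continuous_pow 2).intervalIntegrable _ _), integral_pow, intervalIntegral.integral_const]
    norm_num

variable {ω ρ g g' f f' : C(ℝ, ℝ)}

lemma smoothing_apply (ω g : C(ℝ, ℝ)) (x : ℝ) :
    smoothing ω g x = ∫ u in (-1 / 2 : ℝ)..(1 / 2), ω u * g (x + u) := rfl

lemma translation_apply (a : ℝ) (g : C(ℝ, ℝ)) (x : ℝ) : translation a g x = g (x + a) := rfl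

lemma translation_mul (a b : ℝ) : translation a * translation b = translation (a + b) := by
  ext g x
  simp only [Module.End.mul_apply, translation_apply, add_assoc]

lemma commute_smoothing (ω ρ : C(ℝ, ℝ)) : Commute (smoothing ω) (smoothing ρ) := by
  ext g x
  simp only [Module.End.mul_apply, smoothing_apply, ← intervalIntegral.integral_const_mul]
  rw [MeasureTheory.intervalIntegral_intervalIntegral_swap]
  · refine intervalIntegral.integral_congr fun u _ ↦ intervalIntegral.integral_congr fun v _ ↦ ?_
    rw [add_right_comm, mul_left_comm]
  · have hcont : Continuous (Function.uncurry fun u v ↦ ω u * (ρ v * g (x + u + v))) := by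
      unfold Function.uncurry
      fun_prop
    have hcompact := (isCompact_uIcc (a := (-1 / 2 : ℝ)) (b := 1 / 2)).prod
      (isCompact_uIcc (a := (-1 / 2 : ℝ)) (b := 1 / 2))
    exact (hcont.continuousOn.integrableOn_compact hcompact).mono_set
      (Set.prod_mono Set.uIoc_subset_uIcc Set.uIoc_subset_uIcc)

lemma commute_smoothing_translation (ω : C(ℝ, ℝ)) (a : ℝ) :
    Commute (smoothing ω) (translation a) := by
  ext g x
  simp only [Module.End.mul_apply, smoothing_apply, translation_apply, add_right_comm]

lemma IsKernel.smoothing_const (hω : IsKernel ω) (c : ℝ) :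
    smoothing ω (ContinuousMap.const ℝ c) = ContinuousMap.const ℝ c := by
  ext x
  simp only [smoothing_apply, ContinuousMap.const_apply, intervalIntegral.integral_mul_const,
    hω.integral_eq_one, one_mul]

lemma IsKernel.smoothing_apply_mono (hω : IsKernel ω) {x : ℝ}
    (h : ∀ u ∈ Set.Icc (-1 / 2 : ℝ) (1 / 2), g (x + u) ≤ g' (x + u)) :
    smoothing ω g x ≤ smoothing ω g' x :=
  intervalIntegral.integral_mono_on (by norm_num)
    (Continuous.intervalIntegrable (by fun_prop) _ _)
    (Continuous.intervalIntegrable (by fun_prop) _ _)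
    fun u hu ↦ mul_le_mul_of_nonneg_left (h u hu) (hω.nonneg u hu)

lemma IsKernel.smoothing_apply_mem_Icc (hω : IsKernel ω) {x a b : ℝ}
    (h : ∀ u ∈ Set.Icc (-1 / 2 : ℝ) (1 / 2), g (x + u) ∈ Set.Icc a b) :
    smoothing ω g x ∈ Set.Icc a b := by
  have hlower := hω.smoothing_apply_mono (g := .const ℝ a) (x := x) fun u hu ↦ (h u hu).1
  have hupper := hω.smoothing_apply_mono (g' := .const ℝ b) (x := x) fun u hu ↦ (h u hu).2
  rw [hω.smoothing_const] at hlower hupper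
  exact ⟨hlower, hupper⟩

lemma unitAverage_pow_const (m : ℕ) (c : ℝ) :
    (unitAverage ^ m) (ContinuousMap.const ℝ c) = ContinuousMap.const ℝ c := by
  induction m with
  | zero => rfl
  | succ m ih =>
    rw [pow_succ, Module.End.mul_apply, unitAverage, isKernel_one.smoothing_const,
      ← unitAverage, ih]

lemma unitAverage_pow_apply_mono (m : ℕ) (h : ∀ x, g x ≤ g' x) (x : ℝ) :
    (unitAverage ^ m) g x ≤ (unitAverage ^ m) g' x := by
  induction m generalizing x with
  | zero => exact h x
  | succ m ih =>
    rw [pow_succ', Module.End.mul_apply, Module.End.mul_apply]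
    exact isKernel_one.smoothing_apply_mono fun u _ ↦ ih (x + u)

lemma abs_unitAverage_pow_apply_le (m : ℕ) (h : ∀ x, |g x| ≤ g' x) (x : ℝ) :
    |(unitAverage ^ m) g x| ≤ (unitAverage ^ m) g' x := by
  have hlower := unitAverage_pow_apply_mono m (g := -g') (fun y ↦ (abs_le.1 (h y)).1) x
  rw [map_neg] at hlower
  exact abs_le.2 ⟨hlower, unitAverage_pow_apply_mono m (fun y ↦ (abs_le.1 (h y)).2) x⟩

lemma unitAverage_apply_eq_integral (g : C(ℝ, ℝ)) (x : ℝ) :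
    unitAverage g x = ∫ u in (x - 1 / 2)..(x + 1 / 2), g u := by
  simp only [unitAverage, smoothing_apply, ContinuousMap.one_apply, one_mul]
  rw [intervalIntegral.integral_comp_add_left]
  congr 1
  ring

lemma unitAverage_apply_eq_sub (hf : ∀ x, HasDerivAt f (f' x) x) (x : ℝ) :
    unitAverage f' x = f (x + 1 / 2) - f (x - 1 / 2) := by
  rw [unitAverage_apply_eq_integral]
  exact intervalIntegral.integral_eq_sub_of_hasDerivAt (fun u _ ↦ hf u)
    (f'.continuous.intervalIntegrable _ _)

lemma hasDerivAt_unitAverage (hf : ∀ x, HasDerivAt f (f' x) x) (x : ℝ) :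
    HasDerivAt (unitAverage f) (unitAverage f' x) x := by
  have hprimitive (y : ℝ) : HasDerivAt (fun x ↦ ∫ u in (0 : ℝ)..x, f u) (f y) y :=
    f.continuous.integral_hasStrictDerivAt 0 y |>.hasDerivAt
  have haverage : ⇑(unitAverage f) =
      fun x ↦ (∫ u in (0 : ℝ)..(x + 1 / 2), f u) - ∫ u in (0 : ℝ)..(x - 1 / 2), f u := by
    funext x
    rw [unitAverage_apply_eq_integral, intervalIntegral.integral_interval_sub_left
      (f.continuous.intervalIntegrable _ _) (f.continuous.intervalIntegrable _ _)]
  rw [haverage, unitAverage_apply_eq_sub hf]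
  exact ((hprimitive (x + 1 / 2)).comp_add_const x (1 / 2)).sub
    ((hprimitive (x - 1 / 2)).comp_sub_const x (1 / 2))

-- Integration by parts against `(u ^ 2 - 1 / 4) / 2`, which vanishes at `±1 / 2`.
lemma integral_mul_id_eq_zeroBias (hf : ∀ x, HasDerivAt f (f' x) x) (x : ℝ) :
    ∫ u in (-1 / 2 : ℝ)..(1 / 2), f (x + u) * u = (1 / 12) * smoothing zeroBiasKernel f' x := by
  have hparts := intervalIntegral.integral_mul_deriv_eq_deriv_mul (a := (-1 / 2 : ℝ)) (b := 1 / 2)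
    (u := fun u ↦ f (x + u)) (u' := fun u ↦ f' (x + u))
    (v := fun u ↦ (u ^ 2 - 1 / 4) / 2) (v' := fun u ↦ u)
    (fun u _ ↦ (hf (x + u)).comp_const_add x u)
    (fun u _ ↦ by
      simpa using ((hasDerivAt_pow 2 u).sub_const ((1 : ℝ) / 4)).div_const 2)
    (Continuous.intervalIntegrable (by fun_prop) _ _)
    (Continuous.intervalIntegrable (by fun_prop) _ _)
  rw [hparts, smoothing_apply, ← intervalIntegral.integral_const_mul,
    show ((1 / 2 : ℝ) ^ 2 - 1 / 4) / 2 = 0 by norm_num,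
    show ((-1 / 2 : ℝ) ^ 2 - 1 / 4) / 2 = 0 by norm_num,
    mul_zero, mul_zero, sub_zero, zero_sub, ← intervalIntegral.integral_neg]
  refine intervalIntegral.integral_congr fun u _ ↦ ?_
  simp only [zeroBiasKernel, ContinuousMap.coe_mk]
  ring

lemma unitAverage_id_mul (hf : ∀ x, HasDerivAt f (f' x) x) :
    unitAverage (ContinuousMap.id ℝ * f) =
      ContinuousMap.id ℝ * unitAverage f + (1 / 12 : ℝ) • smoothing zeroBiasKernel f' := by
  ext x
  simp only [ContinuousMap.add_apply, ContinuousMap.mul_apply, ContinuousMap.smul_apply,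
    ContinuousMap.id_apply, smul_eq_mul]
  rw [← integral_mul_id_eq_zeroBias hf]
  simp only [unitAverage, smoothing_apply, ContinuousMap.one_apply, ContinuousMap.mul_apply,
    ContinuousMap.id_apply, one_mul]
  rw [← intervalIntegral.integral_const_mul, ← intervalIntegral.integral_add
    (Continuous.intervalIntegrable (by fun_prop) _ _)
    (Continuous.intervalIntegrable (by fun_prop) _ _)]
  exact intervalIntegral.integral_congr fun u _ ↦ by ring

-- The zero-bias identity `E[S f(S)] = Var(S) E[f'(S*)]` for a sum `S` of `n + 1` uniform variables.
lemma unitAverage_pow_id_mul (n : ℕ) (hf : ∀ x, HasDerivAt f (f' x) x) :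
    (unitAverage ^ (n + 1)) (ContinuousMap.id ℝ * f) =
      ContinuousMap.id ℝ * (unitAverage ^ (n + 1)) f +
        ((n + 1) / 12 : ℝ) • (unitAverage ^ n) (smoothing zeroBiasKernel f') := by
  induction n generalizing f f' with
  | zero => simpa using unitAverage_id_mul hf
  | succ n ih =>
    have hcomm : smoothing zeroBiasKernel (unitAverage f') =
        unitAverage (smoothing zeroBiasKernel f') :=
      congr($(commute_smoothing zeroBiasKernel 1) f')
    rw [pow_succ unitAverage (n + 1), Module.End.mul_apply, unitAverage_id_mul hf, map_add,
      map_smul, ih (hasDerivAt_unitAverage hf), hcomm,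
      ← Module.End.mul_apply (unitAverage ^ n) unitAverage, ← pow_succ, Module.End.mul_apply,
      add_assoc, ← add_smul]
    push_cast
    congr 2
    ring

lemma unitAverage_pow_id (n : ℕ) :
    (unitAverage ^ n) (ContinuousMap.id ℝ) = ContinuousMap.id ℝ := by
  rcases n with _ | n
  · rfl
  · have h := unitAverage_pow_id_mul n (f := .const ℝ 1) (f' := .const ℝ 0)
      fun x ↦ hasDerivAt_const x 1
    rw [unitAverage_pow_const, isKernel_zeroBiasKernel.smoothing_const, unitAverage_pow_const] at h
    ext x
    simpa using congr($h x)

lemma unitAverage_pow_sq (n : ℕ) (x : ℝ) :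
    (unitAverage ^ n) (ContinuousMap.id ℝ * ContinuousMap.id ℝ) x = x ^ 2 + n / 12 := by
  rcases n with _ | n
  · simp [sq]
  · have h := unitAverage_pow_id_mul n (f := .id ℝ) (f' := .const ℝ 1) fun x ↦ hasDerivAt_id x
    rw [unitAverage_pow_id, isKernel_zeroBiasKernel.smoothing_const, unitAverage_pow_const] at h
    simp [h, sq]

end Smoothing

/-! ### The normal law and Stein's equation -/

section Normal

open MeasureTheory Set

/-- The standard normal density. -/
noncomputable def stdNormalPDF (t : ℝ) : ℝ := (√(2 * Real.pi))⁻¹ * Real.exp (-(t ^ 2) / 2)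

lemma stdNormalPDF_eq_gaussianPDFReal :
    stdNormalPDF = ProbabilityTheory.gaussianPDFReal 0 1 := by
  funext t
  simp [stdNormalPDF, ProbabilityTheory.gaussianPDFReal]

lemma stdNormalPDF_pos (t : ℝ) : 0 < stdNormalPDF t := by
  unfold stdNormalPDF
  positivity

lemma stdNormalPDF_neg (t : ℝ) : stdNormalPDF (-t) = stdNormalPDF t := by
  simp [stdNormalPDF]

lemma integrable_stdNormalPDF : Integrable stdNormalPDF :=
  stdNormalPDF_eq_gaussianPDFReal ▸ ProbabilityTheory.integrable_gaussianPDFReal 0 1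

lemma integral_stdNormalPDF : ∫ t, stdNormalPDF t = 1 :=
  stdNormalPDF_eq_gaussianPDFReal ▸
    ProbabilityTheory.integral_gaussianPDFReal_eq_one 0 one_ne_zero

lemma hasDerivAt_stdNormalPDF (t : ℝ) : HasDerivAt stdNormalPDF (-t * stdNormalPDF t) t := by
  refine (((hasDerivAt_pow 2 t).fun_neg.div_const 2).exp.const_mul _).congr_deriv ?_
  rw [stdNormalPDF]
  push_cast
  ring

lemma continuous_stdNormalPDF : Continuous stdNormalPDF := by
  unfold stdNormalPDF
  fun_prop

lemma stdNormalCDF_eq_integral (y : ℝ) : stdNormalCDF y = ∫ t in Iic y, stdNormalPDF t := by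
  simp only [stdNormalCDF, stdNormalPDF, integral_const_mul]

lemma integral_Ioi_stdNormalPDF (y : ℝ) :
    ∫ t in Ioi y, stdNormalPDF t = ∫ t in Iic (-y), stdNormalPDF t := by
  simpa only [stdNormalPDF_neg, neg_neg] using (integral_comp_neg_Iic (-y) stdNormalPDF).symm

lemma integrable_neg_mul_stdNormalPDF : Integrable fun t ↦ -t * stdNormalPDF t := by
  have h := (integrable_mul_exp_neg_mul_sq (b := 1 / 2) (by norm_num)).const_mul
    (-(√(2 * Real.pi))⁻¹)
  refine h.congr (.of_forall fun t ↦ ?_)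
  simp only [stdNormalPDF, show -(1 / 2) * t ^ 2 = -(t ^ 2) / 2 by ring]
  ring

lemma tendsto_stdNormalPDF_atBot : Filter.Tendsto stdNormalPDF Filter.atBot (nhds 0) := by
  have hsq : Filter.Tendsto (fun t : ℝ ↦ t ^ 2) Filter.atBot Filter.atTop := by
    simpa [Function.comp_def] using
      (Filter.tendsto_pow_atTop (α := ℝ) two_ne_zero).comp Filter.tendsto_neg_atBot_atTop
  have hexp := Real.tendsto_exp_atBot.comp
    ((Filter.tendsto_neg_atTop_atBot.comp hsq).atBot_div_const (r := 2) (by norm_num))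
  have hpdf := hexp.const_mul (√(2 * Real.pi))⁻¹
  rwa [mul_zero] at hpdf

lemma abs_mul_integral_Iic_stdNormalPDF_le {y : ℝ} (hy : y ≤ 0) :
    |y| * ∫ t in Iic y, stdNormalPDF t ≤ stdNormalPDF y := by
  have hint := integrable_neg_mul_stdNormalPDF
  calc |y| * ∫ t in Iic y, stdNormalPDF t
      = ∫ t in Iic y, -y * stdNormalPDF t := by rw [abs_of_nonpos hy, integral_const_mul]
    _ ≤ ∫ t in Iic y, -t * stdNormalPDF t :=
        setIntegral_mono_on (integrable_stdNormalPDF.const_mul _).integrableOn hint.integrableOn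
          measurableSet_Iic fun t ht ↦
            mul_le_mul_of_nonneg_right (neg_le_neg ht) (stdNormalPDF_pos t).le
    _ = stdNormalPDF y := by
        rw [integral_Iic_of_hasDerivAt_of_tendsto' (fun t _ ↦ hasDerivAt_stdNormalPDF t)
          hint.integrableOn tendsto_stdNormalPDF_atBot, sub_zero]

lemma stdNormalPDF_le_exp (t : ℝ) : stdNormalPDF t ≤ Real.exp (-(t ^ 2) / 2) := by
  refine mul_le_of_le_one_left (Real.exp_nonneg _) (inv_le_one_of_one_le₀ ?_)
  rw [Real.one_le_sqrt]
  linarith [Real.pi_gt_three]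

lemma abs_stdNormalCDF_sub_le {a b M : ℝ} (hM : ∀ t ∈ uIoc a b, stdNormalPDF t ≤ M) :
    |stdNormalCDF b - stdNormalCDF a| ≤ M * |b - a| := by
  rw [stdNormalCDF_eq_integral, stdNormalCDF_eq_integral, intervalIntegral.integral_Iic_sub_Iic
    integrable_stdNormalPDF.integrableOn integrable_stdNormalPDF.integrableOn]
  rw [← Real.norm_eq_abs (∫ t in a..b, stdNormalPDF t)]
  refine intervalIntegral.norm_integral_le_of_norm_le_const fun t ht ↦ ?_
  rw [Real.norm_of_nonneg (stdNormalPDF_pos t).le]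
  exact hM t ht

lemma abs_stdNormalCDF_sub_le_abs_sub (a b : ℝ) : |stdNormalCDF b - stdNormalCDF a| ≤ |b - a| := by
  refine (abs_stdNormalCDF_sub_le fun t _ ↦ ?_).trans_eq (one_mul _)
  exact (stdNormalPDF_le_exp t).trans (Real.exp_le_one_iff.2 (by nlinarith))

lemma abs_mul_exp_neg_sq_div_two_le_one (x : ℝ) : |x| * Real.exp (-(x ^ 2) / 2) ≤ 1 := by
  have hx : |x| ≤ Real.exp (x ^ 2 / 2) := by
    have := Real.add_one_le_exp (x ^ 2 / 2)
    nlinarith [sq_abs x, sq_nonneg (|x| - 1)]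
  rwa [neg_div, Real.exp_neg, ← div_eq_mul_inv, div_le_one (Real.exp_pos _)]

lemma abs_stdNormalCDF_mul_sub_le {a : ℝ} (ha : 1 ≤ a) (x : ℝ) :
    |stdNormalCDF (a * x) - stdNormalCDF x| ≤ a - 1 := by
  have hdensity : ∀ t ∈ uIoc x (a * x), stdNormalPDF t ≤ Real.exp (-(x ^ 2) / 2) := by
    intro t ht
    refine (stdNormalPDF_le_exp t).trans (Real.exp_le_exp.2 ?_)
    suffices x ^ 2 ≤ t ^ 2 by linarith
    rcases le_total 0 x with hx | hx
    · rw [uIoc_of_le (by nlinarith)] at ht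
      nlinarith [ht.1]
    · rw [uIoc_of_ge (by nlinarith)] at ht
      nlinarith [ht.2]
  calc |stdNormalCDF (a * x) - stdNormalCDF x|
      ≤ Real.exp (-(x ^ 2) / 2) * |a * x - x| := abs_stdNormalCDF_sub_le hdensity
    _ = (a - 1) * (|x| * Real.exp (-(x ^ 2) / 2)) := by
        rw [← sub_one_mul, abs_mul, abs_of_nonneg (by linarith : 0 ≤ a - 1)]
        ring
    _ ≤ a - 1 := mul_le_of_le_one_right (by linarith) (abs_mul_exp_neg_sq_div_two_le_one x)

lemma integrable_mul_stdNormalPDF {k : ℝ → ℝ} (hk : Continuous k) {c : ℝ}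
    (hbound : ∀ t, |k t| ≤ c) :
    Integrable fun t ↦ k t * stdNormalPDF t :=
  integrable_stdNormalPDF.bdd_mul hk.aestronglyMeasurable (.of_forall hbound)

/-- The bounded solution of Stein's equation `f' y = y * f y + k y`, for `k` centred under the
standard normal law. -/
noncomputable def steinSolution (k : ℝ → ℝ) (y : ℝ) : ℝ :=
  (∫ t in Iic y, k t * stdNormalPDF t) / stdNormalPDF y

variable {k : ℝ → ℝ}

lemma hasDerivAt_integral_Iic {f : ℝ → ℝ} (hcont : Continuous f) (hint : Integrable f) (y : ℝ) :
    HasDerivAt (fun y ↦ ∫ t in Iic y, f t) (f y) y := by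
  have hsplit : (fun y ↦ ∫ t in Iic y, f t) =
      fun y ↦ (∫ t in Iic 0, f t) + ∫ t in (0 : ℝ)..y, f t := by
    funext z
    rw [← intervalIntegral.integral_Iic_sub_Iic hint.integrableOn hint.integrableOn,
      add_sub_cancel]
  rw [hsplit]
  exact (hcont.integral_hasStrictDerivAt 0 y).hasDerivAt.const_add _

lemma hasDerivAt_steinSolution (hk : Continuous k) (hbound : ∀ t, |k t| ≤ 1) (y : ℝ) :
    HasDerivAt (steinSolution k) (y * steinSolution k y + k y) y := by
  have hpdf := (stdNormalPDF_pos y).ne'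
  have hprimitive := hasDerivAt_integral_Iic (hk.mul continuous_stdNormalPDF)
    (integrable_mul_stdNormalPDF hk hbound) y
  refine (hprimitive.div (hasDerivAt_stdNormalPDF y) hpdf).congr_deriv ?_
  simp only [steinSolution, Pi.mul_apply]
  field_simp
  ring

lemma abs_setIntegral_mul_stdNormalPDF_le (hk : Continuous k) (hbound : ∀ t, |k t| ≤ 1) {s : Set ℝ}
    (hs : MeasurableSet s) :
    |∫ t in s, k t * stdNormalPDF t| ≤ ∫ t in s, stdNormalPDF t := by
  refine abs_integral_le_integral_abs.trans ?_
  refine setIntegral_mono_on (integrable_mul_stdNormalPDF hk hbound).abs.integrableOn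
    integrable_stdNormalPDF.integrableOn hs fun t _ ↦ ?_
  rw [abs_mul, abs_of_pos (stdNormalPDF_pos t)]
  exact mul_le_of_le_one_left (stdNormalPDF_pos t).le (hbound t)

lemma abs_mul_steinSolution_le (hk : Continuous k) (hbound : ∀ t, |k t| ≤ 1)
    (hcentred : ∫ t, k t * stdNormalPDF t = 0) (y : ℝ) : |y * steinSolution k y| ≤ 1 := by
  have hint := integrable_mul_stdNormalPDF hk hbound
  rw [steinSolution, mul_div_assoc', abs_div, abs_of_pos (stdNormalPDF_pos y),
    div_le_one (stdNormalPDF_pos y), abs_mul]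
  rcases le_total y 0 with hy | hy
  · exact (mul_le_mul_of_nonneg_left (abs_setIntegral_mul_stdNormalPDF_le hk hbound
      measurableSet_Iic) (abs_nonneg y)).trans (abs_mul_integral_Iic_stdNormalPDF_le hy)
  · have hupper : ∫ t in Iic y, k t * stdNormalPDF t = -∫ t in Ioi y, k t * stdNormalPDF t := by
      rw [eq_neg_iff_add_eq_zero, ← hcentred]
      exact intervalIntegral.integral_Iic_add_Ioi hint.integrableOn hint.integrableOn
    have htail := abs_mul_integral_Iic_stdNormalPDF_le (neg_nonpos.2 hy)
    rw [abs_neg, ← integral_Ioi_stdNormalPDF, stdNormalPDF_neg] at htail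
    rw [hupper, abs_neg]
    exact (mul_le_mul_of_nonneg_left (abs_setIntegral_mul_stdNormalPDF_le hk hbound
      measurableSet_Ioi) (abs_nonneg y)).trans htail

lemma one_sixth_le_stdNormalPDF {y : ℝ} (hy : |y| ≤ 1) : 1 / 6 ≤ stdNormalPDF y := by
  have hsqrt : √(2 * Real.pi) ≤ 3 := by
    rw [Real.sqrt_le_left (by norm_num)]
    linarith [Real.pi_lt_d2]
  have hexp : 1 / 2 ≤ Real.exp (-(y ^ 2) / 2) := by
    have hsq : y ^ 2 ≤ 1 := (sq_le_one_iff_abs_le_one y).2 hy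
    linarith [Real.add_one_le_exp (-(y ^ 2) / 2)]
  calc (1 / 6 : ℝ) = 3⁻¹ * (1 / 2) := by norm_num
    _ ≤ (√(2 * Real.pi))⁻¹ * Real.exp (-(y ^ 2) / 2) := by gcongr

lemma abs_steinSolution_le (hk : Continuous k) (hbound : ∀ t, |k t| ≤ 1)
    (hcentred : ∫ t, k t * stdNormalPDF t = 0) (y : ℝ) : |steinSolution k y| ≤ 6 := by
  rcases le_total 1 |y| with hy | hy
  · have hmul := abs_mul_steinSolution_le hk hbound hcentred y
    rw [abs_mul] at hmul
    nlinarith [abs_nonneg (steinSolution k y)]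
  · have hnum : |∫ t in Iic y, k t * stdNormalPDF t| ≤ 1 := by
      refine (abs_setIntegral_mul_stdNormalPDF_le hk hbound measurableSet_Iic).trans ?_
      rw [← integral_stdNormalPDF]
      exact setIntegral_le_integral integrable_stdNormalPDF
        (.of_forall fun t ↦ (stdNormalPDF_pos t).le)
    rw [steinSolution, abs_div, abs_of_pos (stdNormalPDF_pos y), div_le_iff₀ (stdNormalPDF_pos y)]
    linarith [one_sixth_le_stdNormalPDF hy]

end Normal

/-! ### Normal approximation of the Irwin–Hall law -/

section IrwinHall

open MeasureTheory

variable {ω k f f' : C(ℝ, ℝ)} {σ : ℝ}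

lemma exists_scaled_stein_solution (hσ : 0 < σ) (hbound : ∀ t, |k t| ≤ 1)
    (hcentred : ∫ t, k (σ * t) * stdNormalPDF t = 0) :
    ∃ f f' : C(ℝ, ℝ), (∀ w, HasDerivAt f (f' w) w) ∧ σ ^ 2 • f' = ContinuousMap.id ℝ * f + k ∧
      (∀ w, |w * f w| ≤ 1) ∧ ∀ w, |f w| ≤ 6 / σ := by
  have hk : Continuous fun t ↦ k (σ * t) := by fun_prop
  set F := steinSolution fun t ↦ k (σ * t) with hF
  have hderiv (w : ℝ) : HasDerivAt (fun w ↦ F (w / σ) / σ)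
      ((w * (F (w / σ) / σ) + k w) / σ ^ 2) w := by
    refine (((hasDerivAt_steinSolution hk (fun t ↦ hbound _) (w / σ)).comp w
      ((hasDerivAt_id w).div_const σ)).div_const σ).congr_deriv ?_
    rw [mul_div_cancel₀ w hσ.ne']
    rw [← hF]
    field_simp
  have hcont : Continuous fun w ↦ F (w / σ) / σ :=
    continuous_iff_continuousAt.2 fun w ↦ (hderiv w).continuousAt
  refine ⟨⟨_, hcont⟩, ⟨fun w ↦ (w * (F (w / σ) / σ) + k w) / σ ^ 2, by fun_prop⟩, hderiv,
    ?_, ?_, ?_⟩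
  · ext w
    simp only [ContinuousMap.smul_apply, ContinuousMap.add_apply, ContinuousMap.mul_apply,
      ContinuousMap.id_apply, ContinuousMap.coe_mk, smul_eq_mul]
    rw [mul_div_cancel₀ _ (by positivity)]
  · intro w
    rw [ContinuousMap.coe_mk, ← mul_div_assoc, mul_div_right_comm]
    exact abs_mul_steinSolution_le hk (fun t ↦ hbound _) hcentred _
  · intro w
    rw [ContinuousMap.coe_mk, abs_div, abs_of_pos hσ]
    gcongr
    exact abs_steinSolution_le hk (fun t ↦ hbound _) hcentred _

lemma IsKernel.abs_smoothing_id_mul_sub_le (hω : IsKernel ω) (hf : ∀ x, HasDerivAt f (f' x) x)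
    {A B : ℝ} (hA : ∀ x, |f x| ≤ A) (hB : ∀ x, |f' x| ≤ B) (v : ℝ) :
    |smoothing ω (ContinuousMap.id ℝ * f) v - v * f v| ≤ (A + (|v| + 1 / 2) * B) / 2 := by
  set D := A + (|v| + 1 / 2) * B
  have hA_nonneg : 0 ≤ A := (abs_nonneg _).trans (hA 0)
  have hB_nonneg : 0 ≤ B := (abs_nonneg _).trans (hB 0)
  have hderiv : ∀ w ∈ Set.Icc (v - 1 / 2) (v + 1 / 2), ‖1 * f w + w * f' w‖ ≤ D := by
    intro w hw
    have habs : |w| ≤ |v| + 1 / 2 :=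
      abs_le.2 ⟨by linarith [hw.1, neg_abs_le v], by linarith [hw.2, le_abs_self v]⟩
    rw [one_mul]
    refine (norm_add_le _ _).trans (add_le_add (hA w) ?_)
    rw [norm_mul]
    exact mul_le_mul habs (hB w) (abs_nonneg _) (by positivity)
  have hincrement (u : ℝ) (hu : u ∈ Set.Icc (-1 / 2 : ℝ) (1 / 2)) :
      (v + u) * f (v + u) ∈ Set.Icc (v * f v - D / 2) (v * f v + D / 2) := by
    have hmean := (convex_Icc (v - 1 / 2) (v + 1 / 2)).norm_image_sub_le_of_norm_hasDerivWithin_le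
      (fun w _ ↦ ((hasDerivAt_id w).mul (hf w)).hasDerivWithinAt) hderiv
      (x := v) (y := v + u) ⟨by linarith, by linarith⟩ ⟨by linarith [hu.1], by linarith [hu.2]⟩
    have hu' : ‖v + u - v‖ ≤ 1 / 2 := by
      rw [add_sub_cancel_left]
      exact abs_le.2 ⟨by linarith [hu.1], hu.2⟩
    have habs := abs_sub_le_iff.1 (hmean.trans
      (mul_le_mul_of_nonneg_left hu' (by positivity : 0 ≤ D)))
    simp only [Pi.mul_apply, id_eq] at habs
    exact ⟨by linarith [habs.2], by linarith [habs.1]⟩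
  have hmem := hω.smoothing_apply_mem_Icc (g := ContinuousMap.id ℝ * f) hincrement
  exact abs_sub_le_iff.2 ⟨by linarith [hmem.2], by linarith [hmem.1]⟩

lemma abs_unitAverage_sub_smoothing_id_mul_le (hω : IsKernel ω) (hf : ∀ x, HasDerivAt f (f' x) x)
    (hσ : 0 < σ) (hA : ∀ x, |f x| ≤ 6 / σ) (hB : ∀ x, |f' x| ≤ 2 / σ ^ 2) (v : ℝ) :
    |unitAverage (ContinuousMap.id ℝ * f) v - smoothing ω (ContinuousMap.id ℝ * f) v| ≤
      7 / σ + 1 / σ ^ 2 + (1 / σ ^ 3) * v ^ 2 := by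
  have haverage := isKernel_one.abs_smoothing_id_mul_sub_le hf hA hB v
  have hsmoothing := hω.abs_smoothing_id_mul_sub_le hf hA hB v
  have hAMGM : |v| / σ ^ 2 * 2 ≤ 1 / σ + (1 / σ ^ 3) * v ^ 2 := by
    have hsq : 0 ≤ (σ - |v|) ^ 2 / σ ^ 3 := by positivity
    refine le_of_sub_nonneg (hsq.trans_eq ?_)
    rw [← sq_abs v]
    field_simp
    ring
  calc |unitAverage (ContinuousMap.id ℝ * f) v - smoothing ω (ContinuousMap.id ℝ * f) v|
      ≤ 6 / σ + (|v| + 1 / 2) * (2 / σ ^ 2) := by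
        rw [abs_sub_comm] at hsmoothing
        exact (abs_sub_le _ (v * f v) _).trans ((add_le_add haverage hsmoothing).trans_eq (by ring))
    _ = 6 / σ + 1 / σ ^ 2 + |v| / σ ^ 2 * 2 := by ring
    _ ≤ 6 / σ + 1 / σ ^ 2 + (1 / σ + (1 / σ ^ 3) * v ^ 2) := by gcongr
    _ = 7 / σ + 1 / σ ^ 2 + (1 / σ ^ 3) * v ^ 2 := by ring

lemma stein_error_le {n : ℕ} (hσ : 0 < σ) (hvar : σ ^ 2 = (n + 1) / 12) :
    7 / σ + 1 / σ ^ 2 + (1 / σ ^ 3) * (n / 12) ≤ 12 / σ := by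
  have hquarter : 1 / 4 ≤ σ := by
    have : (0 : ℝ) ≤ n := n.cast_nonneg
    nlinarith
  have hthird : (1 / σ ^ 3) * (n / 12) ≤ 1 / σ := by
    calc (1 / σ ^ 3) * (n / 12) ≤ (1 / σ ^ 3) * σ ^ 2 := by gcongr; linarith
      _ = 1 / σ := by field_simp
  have hsecond : 1 / σ ^ 2 ≤ 4 / σ := by
    rw [div_le_div_iff₀ (by positivity) hσ]
    nlinarith
  calc 7 / σ + 1 / σ ^ 2 + (1 / σ ^ 3) * (n / 12) ≤ 7 / σ + 4 / σ + 1 / σ := by gcongr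
    _ = 12 / σ := by ring

-- With `f` the Stein solution for `k` and `g w = w * f w`, the zero-bias identity evaluates
-- `smoothing k` at the origin, after `unitAverage ^ n`, as `unitAverage g - smoothing g`.
lemma abs_unitAverage_pow_smoothing_le {n : ℕ} (hσ : 0 < σ) (hvar : σ ^ 2 = (n + 1) / 12)
    (hbound : ∀ t, |k t| ≤ 1) (hcentred : ∫ t, k (σ * t) * stdNormalPDF t = 0) :
    |(unitAverage ^ n) (smoothing zeroBiasKernel k) 0| ≤ 12 / σ := by
  obtain ⟨f, f', hf, hstein, hmul, hA⟩ := exists_scaled_stein_solution hσ hbound hcentred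
  let g := ContinuousMap.id ℝ * f
  have hB (w : ℝ) : |f' w| ≤ 2 / σ ^ 2 := by
    have hw : σ ^ 2 * f' w = w * f w + k w := congr($hstein w)
    rw [le_div_iff₀ (by positivity), ← abs_of_pos (by positivity : 0 < σ ^ 2), ← abs_mul,
      mul_comm, hw]
    exact (abs_add_le _ _).trans (by linarith [hmul w, hbound w])
  have hdiff : (unitAverage ^ n) (smoothing zeroBiasKernel k) 0 =
      (unitAverage ^ n) (unitAverage g - smoothing zeroBiasKernel g) 0 := by
    have hzero := congr($(unitAverage_pow_id_mul n hf) 0)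
    rw [← hvar, ← map_smul, ← map_smul, hstein, map_add, map_add, pow_succ,
      Module.End.mul_apply] at hzero
    simp only [ContinuousMap.add_apply, ContinuousMap.mul_apply, ContinuousMap.id_apply,
      zero_mul, zero_add] at hzero
    rw [map_sub, ContinuousMap.sub_apply, hzero, add_sub_cancel_left]
  have hbase := abs_unitAverage_pow_apply_le n (g := unitAverage g - smoothing zeroBiasKernel g)
    (g' := .const ℝ (7 / σ + 1 / σ ^ 2) + (1 / σ ^ 3) • (.id ℝ * .id ℝ))
    (fun v ↦ (abs_unitAverage_sub_smoothing_id_mul_le isKernel_zeroBiasKernel hf hσ hA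
      hB v).trans_eq (by simp only [sq]; rfl)) 0
  rw [map_add, map_smul, unitAverage_pow_const, ContinuousMap.add_apply, ContinuousMap.smul_apply,
    unitAverage_pow_sq, ContinuousMap.const_apply, smul_eq_mul, zero_pow two_ne_zero,
    zero_add] at hbase
  rw [hdiff]
  exact hbase.trans (stein_error_le hσ hvar)

/-- The distribution function of the uniform law on `[-1/2, 1/2]`, so that `unitAverage ^ n` maps
it to that of a sum of `n + 1` independent uniform variables. -/
noncomputable def ramp : C(ℝ, ℝ) := ⟨fun x ↦ max 0 (min 1 (x + 1 / 2)), by fun_prop⟩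

lemma ramp_apply (x : ℝ) : ramp x = max 0 (min 1 (x + 1 / 2)) := rfl

lemma ramp_nonneg (x : ℝ) : 0 ≤ ramp x := le_max_left _ _

lemma ramp_le_one (x : ℝ) : ramp x ≤ 1 := max_le zero_le_one (min_le_left _ _)

lemma monotone_ramp : Monotone ramp := fun x y h ↦
  max_le_max le_rfl (min_le_min le_rfl (by linarith))

lemma ramp_eq_one {x : ℝ} (h : 1 / 2 ≤ x) : ramp x = 1 := by
  rw [ramp_apply, min_eq_left (by linarith), max_eq_right zero_le_one]

lemma ramp_eq_zero {x : ℝ} (h : x ≤ -1 / 2) : ramp x = 0 := by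
  rw [ramp_apply, min_eq_right (by linarith), max_eq_left (by linarith)]

/-- The distribution function at `x` of `σ * Z + U`, for `Z` standard normal and `U` uniform on
`[-1/2, 1/2]`. -/
noncomputable def rampMean (σ x : ℝ) : ℝ := ∫ t, ramp (σ * t + x) * stdNormalPDF t

lemma integrable_ramp_mul_stdNormalPDF (σ x : ℝ) :
    Integrable fun t ↦ ramp (σ * t + x) * stdNormalPDF t :=
  integrable_mul_stdNormalPDF (by fun_prop) fun t ↦ by
    rw [abs_of_nonneg (ramp_nonneg _)]
    exact ramp_le_one _

lemma rampMean_mem_Icc (σ x : ℝ) : rampMean σ x ∈ Set.Icc 0 1 := by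
  refine ⟨integral_nonneg fun t ↦ mul_nonneg (ramp_nonneg _) (stdNormalPDF_pos t).le, ?_⟩
  rw [← integral_stdNormalPDF]
  exact integral_mono (integrable_ramp_mul_stdNormalPDF σ x) integrable_stdNormalPDF fun t ↦
    mul_le_of_le_one_left (stdNormalPDF_pos t).le (ramp_le_one _)

lemma stdNormalCDF_le_rampMean (hσ : 0 < σ) (x : ℝ) :
    stdNormalCDF ((x - 1 / 2) / σ) ≤ rampMean σ x := by
  rw [stdNormalCDF_eq_integral, ← neg_neg ((x - 1 / 2) / σ), ← integral_Ioi_stdNormalPDF]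
  calc ∫ t in Set.Ioi (-((x - 1 / 2) / σ)), stdNormalPDF t
      = ∫ t in Set.Ioi (-((x - 1 / 2) / σ)), ramp (σ * t + x) * stdNormalPDF t := by
        refine setIntegral_congr_fun measurableSet_Ioi fun t ht ↦ ?_
        rw [Set.mem_Ioi, ← neg_div, div_lt_iff₀ hσ] at ht
        rw [ramp_eq_one (by linarith), one_mul]
    _ ≤ rampMean σ x :=
        setIntegral_le_integral (integrable_ramp_mul_stdNormalPDF σ x)
          (.of_forall fun t ↦ mul_nonneg (ramp_nonneg _) (stdNormalPDF_pos t).le)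

lemma rampMean_le_stdNormalCDF (hσ : 0 < σ) (x : ℝ) :
    rampMean σ x ≤ stdNormalCDF ((x + 1 / 2) / σ) := by
  rw [stdNormalCDF_eq_integral, ← neg_neg ((x + 1 / 2) / σ), ← integral_Ioi_stdNormalPDF]
  calc rampMean σ x
      = ∫ t in Set.Ioi (-((x + 1 / 2) / σ)), ramp (σ * t + x) * stdNormalPDF t := by
        refine (setIntegral_eq_integral_of_forall_compl_eq_zero fun t ht ↦ ?_).symm
        rw [Set.mem_Ioi, not_lt, ← neg_div, le_div_iff₀ hσ] at ht
        rw [ramp_eq_zero (by linarith), zero_mul]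
    _ ≤ ∫ t in Set.Ioi (-((x + 1 / 2) / σ)), stdNormalPDF t :=
        setIntegral_mono_on (integrable_ramp_mul_stdNormalPDF σ x).integrableOn
          integrable_stdNormalPDF.integrableOn measurableSet_Ioi fun t _ ↦
            mul_le_of_le_one_left (stdNormalPDF_pos t).le (ramp_le_one _)

lemma unitAverage_pow_translation (n : ℕ) (a : ℝ) (g : C(ℝ, ℝ)) :
    (unitAverage ^ n) (translation a g) = translation a ((unitAverage ^ n) g) :=
  congr($((commute_smoothing_translation 1 a).pow_left n) g)

lemma abs_unitAverage_pow_smoothing_ramp_sub_le {n : ℕ} (hσ : 0 < σ)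
    (hvar : σ ^ 2 = (n + 1) / 12) (x : ℝ) :
    |(unitAverage ^ n) (smoothing zeroBiasKernel ramp) x - rampMean σ x| ≤ 12 / σ := by
  obtain ⟨hmean_nonneg, hmean_le⟩ := rampMean_mem_Icc σ x
  have hbound (t : ℝ) : |(translation x ramp - .const ℝ (rampMean σ x)) t| ≤ 1 := by
    rw [ContinuousMap.sub_apply, translation_apply, ContinuousMap.const_apply, abs_sub_le_iff]
    exact ⟨by linarith [ramp_le_one (t + x)], by linarith [ramp_nonneg (t + x)]⟩
  have hcentred : ∫ t, (translation x ramp - .const ℝ (rampMean σ x)) (σ * t) *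
      stdNormalPDF t = 0 := by
    simp only [ContinuousMap.sub_apply, ContinuousMap.const_apply, translation_apply, sub_mul]
    rw [integral_sub (integrable_ramp_mul_stdNormalPDF σ x) (integrable_stdNormalPDF.const_mul _),
      integral_const_mul, integral_stdNormalPDF, mul_one, ← rampMean, sub_self]
  have hcomm : smoothing zeroBiasKernel (translation x ramp) =
      translation x (smoothing zeroBiasKernel ramp) :=
    congr($(commute_smoothing_translation zeroBiasKernel x) ramp)
  simpa only [map_sub, isKernel_zeroBiasKernel.smoothing_const, unitAverage_pow_const, hcomm,
    unitAverage_pow_translation, ContinuousMap.sub_apply, translation_apply, zero_add,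
    ContinuousMap.const_apply] using abs_unitAverage_pow_smoothing_le hσ hvar hbound hcentred

lemma smoothing_zeroBiasKernel_ramp_mem_Icc (v : ℝ) :
    smoothing zeroBiasKernel ramp v ∈ Set.Icc (ramp (v - 1 / 2)) (ramp (v + 1 / 2)) :=
  isKernel_zeroBiasKernel.smoothing_apply_mem_Icc fun _ hu ↦
    ⟨monotone_ramp (by linarith [hu.1]), monotone_ramp (by linarith [hu.2])⟩

lemma unitAverage_pow_ramp_le (n : ℕ) (x : ℝ) :
    (unitAverage ^ n) ramp x ≤ (unitAverage ^ n) (smoothing zeroBiasKernel ramp) (x + 1 / 2) := by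
  have h (v : ℝ) : ramp v ≤ translation (1 / 2) (smoothing zeroBiasKernel ramp) v := by
    simpa only [add_sub_cancel_right, translation_apply] using
      (smoothing_zeroBiasKernel_ramp_mem_Icc (v + 1 / 2)).1
  have hmono := unitAverage_pow_apply_mono n h x
  rwa [unitAverage_pow_translation] at hmono

lemma le_unitAverage_pow_ramp (n : ℕ) (x : ℝ) :
    (unitAverage ^ n) (smoothing zeroBiasKernel ramp) (x - 1 / 2) ≤ (unitAverage ^ n) ramp x := by
  have h (v : ℝ) : translation (-(1 / 2)) (smoothing zeroBiasKernel ramp) v ≤ ramp v := by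
    simpa only [neg_add_cancel_right, translation_apply] using
      (smoothing_zeroBiasKernel_ramp_mem_Icc (v + -(1 / 2))).2
  have hmono := unitAverage_pow_apply_mono n h x
  rwa [unitAverage_pow_translation] at hmono

theorem abs_unitAverage_pow_ramp_sub_stdNormalCDF_le {n : ℕ} (hσ : 0 < σ)
    (hvar : σ ^ 2 = (n + 1) / 12) (x : ℝ) :
    |(unitAverage ^ n) ramp x - stdNormalCDF (x / σ)| ≤ 13 / σ := by
  have hupper : (unitAverage ^ n) ramp x ≤ stdNormalCDF ((x + 1) / σ) + 12 / σ := by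
    have hstein := abs_sub_le_iff.1
      (abs_unitAverage_pow_smoothing_ramp_sub_le hσ hvar (x + 1 / 2))
    have hcdf := rampMean_le_stdNormalCDF hσ (x + 1 / 2)
    rw [add_assoc, add_halves] at hcdf
    linarith [unitAverage_pow_ramp_le n x, hstein.1]
  have hlower : stdNormalCDF ((x - 1) / σ) - 12 / σ ≤ (unitAverage ^ n) ramp x := by
    have hstein := abs_sub_le_iff.1
      (abs_unitAverage_pow_smoothing_ramp_sub_le hσ hvar (x - 1 / 2))
    have hcdf := stdNormalCDF_le_rampMean hσ (x - 1 / 2)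
    rw [sub_sub, add_halves] at hcdf
    linarith [le_unitAverage_pow_ramp n x, hstein.2]
  have hshift : |1 / σ| = 1 / σ := abs_of_pos (by positivity)
  have hright := abs_stdNormalCDF_sub_le_abs_sub (x / σ) ((x + 1) / σ)
  have hleft := abs_stdNormalCDF_sub_le_abs_sub ((x - 1) / σ) (x / σ)
  rw [← sub_div, add_sub_cancel_left, hshift] at hright
  rw [← sub_div, sub_sub_cancel, hshift] at hleft
  have hsum : 13 / σ = 12 / σ + 1 / σ := by ring
  exact abs_sub_le_iff.2 ⟨by linarith [(abs_sub_le_iff.1 hright).1],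
    by linarith [(abs_sub_le_iff.1 hleft).1]⟩

end IrwinHall

/-! ### Forward differences -/

section Difference

variable {f f' g : C(ℝ, ℝ)}

/-- The forward difference operator `g ↦ g (· + 1) - g`. -/
def difference : Module.End ℝ C(ℝ, ℝ) := translation 1 - 1

lemma difference_apply (g : C(ℝ, ℝ)) (x : ℝ) : difference g x = g (x + 1) - g x := rfl

lemma difference_pow_succ_apply (m : ℕ) (g : C(ℝ, ℝ)) (x : ℝ) :
    (difference ^ (m + 1)) g x = (difference ^ m) g (x + 1) - (difference ^ m) g x := by
  rw [pow_succ', Module.End.mul_apply, difference_apply]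

lemma fwdDiff_iter_intCast (g : C(ℝ, ℝ)) (m : ℕ) (s : ℤ) :
    (fwdDiff 1)^[m] (fun r : ℤ ↦ g r) s = (difference ^ m) g s := by
  induction m generalizing s with
  | zero => rfl
  | succ m ih =>
    rw [Function.iterate_succ_apply', fwdDiff, ih, ih, difference_pow_succ_apply]
    push_cast
    rfl

lemma difference_pow_apply_congr (m : ℕ) {x : ℝ} (h : ∀ y, x ≤ y → f y = g y) :
    (difference ^ m) f x = (difference ^ m) g x := by
  induction m generalizing x with
  | zero => exact h x le_rfl
  | succ m ih =>
    rw [difference_pow_succ_apply, difference_pow_succ_apply, ih h,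
      ih fun y hy ↦ h y (by linarith)]

lemma abs_difference_pow_apply_le (m : ℕ) {M : ℝ} (h : ∀ x, |g x| ≤ M) (x : ℝ) :
    |(difference ^ m) g x| ≤ 2 ^ m * M := by
  induction m generalizing x with
  | zero => simpa using h x
  | succ m ih =>
    rw [difference_pow_succ_apply]
    calc |(difference ^ m) g (x + 1) - (difference ^ m) g x|
        ≤ 2 ^ m * M + 2 ^ m * M := (abs_sub _ _).trans (add_le_add (ih _) (ih _))
      _ = 2 ^ (m + 1) * M := by ring

lemma commute_difference_translation (a : ℝ) : Commute difference (translation a) := by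
  refine Commute.sub_left ?_ (Commute.one_left _)
  rw [Commute, SemiconjBy, translation_mul, translation_mul, add_comm]

lemma commute_difference_unitAverage : Commute difference unitAverage :=
  (commute_smoothing_translation 1 1).symm.sub_left (Commute.one_left _)

lemma difference_translation_unitAverage_pow (a : ℝ) (m : ℕ) (g : C(ℝ, ℝ)) :
    difference (translation a ((unitAverage ^ m) g)) =
      translation a ((unitAverage ^ m) (difference g)) :=
  congr($((commute_difference_translation a).mul_right
    (commute_difference_unitAverage.pow_right m)) g)

lemma difference_eq_translation_unitAverage (hf : ∀ x, HasDerivAt f (f' x) x) :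
    difference f = translation (1 / 2) (unitAverage f') := by
  ext x
  rw [translation_apply, unitAverage_apply_eq_sub hf, difference_apply, add_assoc, add_halves,
    add_sub_cancel_right]

lemma difference_pow_eq_translation_unitAverage_pow {F : ℕ → C(ℝ, ℝ)}
    (hF : ∀ k x, HasDerivAt (F (k + 1)) (F k x) x) (m j : ℕ) :
    (difference ^ m) (F (m + j)) = translation (m / 2) ((unitAverage ^ m) (F j)) := by
  induction m generalizing j with
  | zero =>
    ext x
    simp [translation_apply]
  | succ m ih =>
    rw [pow_succ', Module.End.mul_apply, add_right_comm, add_assoc, ih,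
      difference_translation_unitAverage_pow, difference_eq_translation_unitAverage (hF j),
      unitAverage_pow_translation, ← Module.End.mul_apply (translation _), translation_mul,
      ← Module.End.mul_apply (unitAverage ^ m), ← pow_succ]
    push_cast
    rw [add_div]

/-- The divided power `x ^ k / k!`. -/
noncomputable def dividedPow (k : ℕ) : C(ℝ, ℝ) := ⟨fun x ↦ x ^ k / k.factorial, by fun_prop⟩

/-- The truncated divided power `max x 0 ^ k / k!`; since `0 ^ 0 = 1`, it is constant for
`k = 0`. -/
noncomputable def truncDividedPow (k : ℕ) : C(ℝ, ℝ) :=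
  ⟨fun x ↦ max x 0 ^ k / k.factorial, by fun_prop⟩

lemma dividedPow_apply (k : ℕ) (x : ℝ) : dividedPow k x = x ^ k / k.factorial := rfl

lemma truncDividedPow_apply (k : ℕ) (x : ℝ) :
    truncDividedPow k x = max x 0 ^ k / k.factorial := rfl

lemma dividedPow_zero : dividedPow 0 = .const ℝ 1 := by
  ext x
  simp [dividedPow_apply]

lemma hasDerivAt_dividedPow (k : ℕ) (x : ℝ) :
    HasDerivAt (dividedPow (k + 1)) (dividedPow k x) x := by
  refine ((hasDerivAt_pow (k + 1) x).div_const ((k + 1).factorial : ℝ)).congr_deriv ?_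
  rw [dividedPow_apply, Nat.factorial_succ, Nat.add_sub_cancel]
  push_cast
  field_simp

lemma hasDerivAt_truncDividedPow (k : ℕ) (x : ℝ) :
    HasDerivAt (truncDividedPow (k + 2)) (truncDividedPow (k + 1) x) x := by
  have hpos (y : ℝ) (hy : 0 ≤ y) (j : ℕ) : truncDividedPow j y = dividedPow j y := by
    rw [truncDividedPow_apply, max_eq_left hy, dividedPow_apply]
  have hneg (y : ℝ) (hy : y ≤ 0) (j : ℕ) : truncDividedPow (j + 1) y = 0 := by
    rw [truncDividedPow_apply, max_eq_right hy, zero_pow j.succ_ne_zero, zero_div]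
  have hright (hx : 0 ≤ x) :
      HasDerivWithinAt (truncDividedPow (k + 2)) (truncDividedPow (k + 1) x) (Set.Ici 0) x := by
    rw [hpos x hx]
    exact (hasDerivAt_dividedPow (k + 1) x).hasDerivWithinAt.congr (fun y hy ↦ hpos y hy _)
      (hpos x hx _)
  have hleft (hx : x ≤ 0) :
      HasDerivWithinAt (truncDividedPow (k + 2)) (truncDividedPow (k + 1) x) (Set.Iic 0) x := by
    rw [hneg x hx]
    exact (hasDerivWithinAt_const x _ 0).congr (fun y hy ↦ hneg y hy _) (hneg x hx _)
  rcases lt_trichotomy x 0 with hx | rfl | hx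
  · exact (hleft hx.le).hasDerivAt (Iic_mem_nhds hx)
  · rw [← hasDerivWithinAt_univ, ← Set.Iic_union_Ici]
    exact (hleft le_rfl).union (hright le_rfl)
  · exact (hright hx.le).hasDerivAt (Ici_mem_nhds hx)

lemma difference_pow_truncDividedPow_apply (m k : ℕ) {x : ℝ} (hx : 0 ≤ x) :
    (difference ^ m) (truncDividedPow k) x = (difference ^ m) (dividedPow k) x :=
  difference_pow_apply_congr m fun y hy ↦ by
    rw [truncDividedPow_apply, max_eq_left (hx.trans hy), dividedPow_apply]

lemma difference_truncDividedPow_one :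
    difference (truncDividedPow 1) = translation (1 / 2) ramp := by
  ext x
  rw [difference_apply, translation_apply, ramp_apply, truncDividedPow_apply,
    truncDividedPow_apply, add_assoc, add_halves]
  simp only [pow_one, Nat.factorial_one, Nat.cast_one, div_one]
  grind

lemma difference_pow_dividedPow_self (m : ℕ) :
    (difference ^ m) (dividedPow m) = .const ℝ 1 := by
  have h := difference_pow_eq_translation_unitAverage_pow hasDerivAt_dividedPow m 0
  rw [add_zero, dividedPow_zero, unitAverage_pow_const] at h
  rw [h]
  rfl

lemma difference_pow_dividedPow_of_lt {m k : ℕ} (h : k < m) :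
    (difference ^ m) (dividedPow k) = 0 := by
  obtain ⟨i, rfl⟩ := Nat.exists_eq_add_of_lt h
  have hconst : difference (.const ℝ 1) = 0 := by
    ext
    exact sub_self 1
  rw [show k + i + 1 = i + 1 + k by lia, pow_add, pow_succ, Module.End.mul_apply,
    Module.End.mul_apply, difference_pow_dividedPow_self, hconst, map_zero]

lemma difference_pow_dividedPow_add_two_apply (m : ℕ) (x : ℝ) :
    (difference ^ m) (dividedPow (m + 2)) x = ((x + m / 2) ^ 2 + m / 12) / 2 := by
  have hsq : dividedPow 2 = (1 / 2 : ℝ) • (ContinuousMap.id ℝ * ContinuousMap.id ℝ) := by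
    ext x
    simp only [dividedPow_apply, Nat.factorial_two, Nat.cast_ofNat, ContinuousMap.smul_apply,
      ContinuousMap.mul_apply, ContinuousMap.id_apply, smul_eq_mul]
    ring
  rw [difference_pow_eq_translation_unitAverage_pow hasDerivAt_dividedPow, translation_apply, hsq,
    map_smul, ContinuousMap.smul_apply, unitAverage_pow_sq, smul_eq_mul]
  ring

/-- The distribution function of a sum of `k + 1` independent uniform variables on `[0, 1]`. -/
noncomputable def irwinHallCDF (k : ℕ) : C(ℝ, ℝ) :=
  translation (-((k + 1) / 2)) ((unitAverage ^ k) ramp)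

lemma difference_pow_truncDividedPow_self (k : ℕ) :
    (difference ^ (k + 1)) (truncDividedPow (k + 1)) = translation (k + 1) (irwinHallCDF k) := by
  rw [pow_succ', Module.End.mul_apply, difference_pow_eq_translation_unitAverage_pow
    (F := fun j ↦ truncDividedPow (j + 1)) hasDerivAt_truncDividedPow k 0,
    difference_translation_unitAverage_pow, difference_truncDividedPow_one,
    unitAverage_pow_translation, irwinHallCDF]
  ext x
  simp only [translation_apply]
  congr 1
  ring

lemma difference_pow_truncDividedPow {n k : ℕ} (h : k ≤ n) :
    (difference ^ (n + 1)) (truncDividedPow (k + 1)) =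
      translation (k + 1) ((difference ^ (n - k)) (irwinHallCDF k)) := by
  rw [show n + 1 = n - k + (k + 1) by lia, pow_add, Module.End.mul_apply,
    difference_pow_truncDividedPow_self]
  exact congr($((commute_difference_translation (k + 1)).pow_left (n - k)) (irwinHallCDF k))

end Difference

/-! ### The distribution function and the moments of the descent number -/

section DescentCounts

lemma fwdDiff_toNat_choose (k : ℕ) :
    fwdDiff 1 (fun y : ℤ ↦ (y.toNat.choose (k + 1) : ℝ)) =
      fun y ↦ if 0 ≤ y then (y.toNat.choose k : ℝ) else 0 := by
  funext y
  rw [fwdDiff]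
  split_ifs with hy
  · rw [Int.toNat_add hy zero_le_one, Int.toNat_one, Nat.choose_succ_succ, Nat.cast_add,
      add_sub_cancel_right]
  · rw [Int.toNat_eq_zero.2 (by lia), Int.toNat_eq_zero.2 (by lia), sub_self]

lemma fwdDiff_iter_toNat_choose (m k : ℕ) :
    (fwdDiff 1)^[m] (fun y : ℤ ↦ (y.toNat.choose (m + k + 1) : ℝ)) =
      fun y ↦ (y.toNat.choose (k + 1) : ℝ) := by
  induction m with
  | zero => simp
  | succ m ih =>
    rw [Function.iterate_succ_apply, fwdDiff_toNat_choose, add_right_comm m 1 k, ← ih]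
    congr 1
    funext y
    split_ifs with hy
    · rfl
    · rw [Int.toNat_eq_zero.2 (by lia), Nat.choose_zero_succ, Nat.cast_zero]

lemma fwdDiff_iter_toNat_choose_self (n : ℕ) :
    (fwdDiff 1)^[n + 1] (fun y : ℤ ↦ (y.toNat.choose (n + 1) : ℝ)) =
      fun y ↦ if 0 ≤ y then 1 else 0 := by
  have h := fwdDiff_iter_toNat_choose n 0
  rw [add_zero, zero_add] at h
  rw [Function.iterate_succ_apply', h]
  simpa only [Nat.choose_zero_right, Nat.cast_one] using fwdDiff_toNat_choose 0

lemma eval_countPoly (n s : ℕ) :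
    (countPoly n).eval (s : ℝ) = ∑ k ∈ range (n + 1), scaledCoeff n k * truncDividedPow k s := by
  rw [Polynomial.eval_eq_sum_range' (Nat.lt_succ_of_le (natDegree_countPoly_le n))]
  refine sum_congr rfl fun k _ ↦ ?_
  rw [truncDividedPow_apply, max_eq_left s.cast_nonneg, scaledCoeff]
  field_simp

-- For `s < 0` both sides vanish, so truncation extends the polynomial identity to all integers.
lemma sum_toNat_choose_descents (n : ℕ) (s : ℤ) :
    ∑ π ∈ involutions (n + 1), ((s + (n - descents π)).toNat.choose (n + 1) : ℝ) =
      ∑ k ∈ range (n + 2), scaledCoeff (n + 1) k * truncDividedPow k s := by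
  rcases le_or_gt 0 s with hs | hs
  · lift s to ℕ using hs
    rw [Int.cast_natCast, ← eval_countPoly, ← sum_choose_descents_eq_eval]
    refine sum_congr rfl fun π _ ↦ ?_
    have := descents_le π
    rw [show ((s : ℤ) + (n - descents π)).toNat = s + n - descents π by lia]
  · rw [sum_range_succ', scaledCoeff_succ_zero, zero_mul, add_zero, sum_eq_zero, sum_eq_zero]
    · intro k _
      rw [truncDividedPow_apply, max_eq_right (mod_cast hs.le), zero_pow k.succ_ne_zero, zero_div,
        mul_zero]
    · intro π _
      rw [Nat.choose_eq_zero_of_lt (by lia), Nat.cast_zero]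

lemma sum_fwdDiff_iter_choose_descents (m n : ℕ) (s : ℤ) :
    ∑ π ∈ involutions (n + 1), (fwdDiff 1)^[m] (fun y : ℤ ↦ (y.toNat.choose (n + 1) : ℝ))
        (s + (n - descents π)) =
      ∑ k ∈ range (n + 2), scaledCoeff (n + 1) k * (difference ^ m) (truncDividedPow k) s := by
  have h : (∑ π ∈ involutions (n + 1),
        fun s : ℤ ↦ ((s + (n - descents π)).toNat.choose (n + 1) : ℝ)) =
      ∑ k ∈ range (n + 2), scaledCoeff (n + 1) k • fun s : ℤ ↦ truncDividedPow k s := by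
    funext s
    simpa only [Finset.sum_apply, Pi.smul_apply, smul_eq_mul] using sum_toNat_choose_descents n s
  have hdiff := congr((fwdDiff 1)^[m] $h s)
  simpa only [fwdDiff_iter_finsetSum, fwdDiff_iter_const_smul, Finset.sum_apply,
    Pi.smul_apply, smul_eq_mul, fwdDiff_iter_intCast, fwdDiff_iter_comp_add 1
      (fun y : ℤ ↦ (y.toNat.choose (n + 1) : ℝ))] using hdiff

theorem card_descents_le (n : ℕ) (z : ℤ) :
    (#{π ∈ involutions (n + 1) | (descents π : ℤ) ≤ z} : ℝ) =
      ∑ k ∈ range (n + 1), scaledCoeff (n + 1) (k + 1) *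
        (difference ^ (n - k)) (irwinHallCDF k) (z - n + (k + 1)) := by
  have h := sum_fwdDiff_iter_choose_descents (n + 1) n (z - n)
  rw [sum_range_succ', scaledCoeff_succ_zero, zero_mul, add_zero,
    fwdDiff_iter_toNat_choose_self] at h
  calc (#{π ∈ involutions (n + 1) | (descents π : ℤ) ≤ z} : ℝ)
      = ∑ π ∈ involutions (n + 1), if 0 ≤ z - n + (n - descents π) then 1 else 0 := by
        simp only [sub_add_sub_cancel, sub_nonneg, sum_boole]
    _ = _ := h
    _ = _ := sum_congr rfl fun k hk ↦ by
        rw [difference_pow_truncDividedPow (mem_range_succ_iff.1 hk), translation_apply]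
        push_cast
        rfl

lemma sum_quadratic_descents (m s : ℕ) :
    ∑ π ∈ involutions (m + 2),
        ((s + m + 1 - descents π : ℝ) * (s + m - descents π : ℝ) / 2) =
      scaledCoeff (m + 2) (m + 2) * (((s + m / 2) ^ 2 + m / 12) / 2) + scaledCoeff (m + 2) m := by
  have hlow : ∑ k ∈ range m, scaledCoeff (m + 2) k * (difference ^ m) (dividedPow k) s = 0 :=
    sum_eq_zero fun k hk ↦ by
      rw [difference_pow_dividedPow_of_lt (mem_range.1 hk), ContinuousMap.zero_apply, mul_zero]
  have hpowers : ∑ k ∈ range (m + 3),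
      scaledCoeff (m + 2) k * (difference ^ m) (truncDividedPow k) ((s : ℤ) : ℝ) =
        scaledCoeff (m + 2) (m + 2) * (((s + m / 2) ^ 2 + m / 12) / 2) +
          scaledCoeff (m + 2) m := by
    simp only [Int.cast_natCast, difference_pow_truncDividedPow_apply m _ s.cast_nonneg]
    rw [sum_range_succ, sum_range_succ, sum_range_succ, hlow, scaledCoeff_succ_self,
      difference_pow_dividedPow_self, difference_pow_dividedPow_add_two_apply,
      ContinuousMap.const_apply]
    ring
  rw [← hpowers, ← sum_fwdDiff_iter_choose_descents m (m + 1) s]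
  simp only [fwdDiff_iter_toNat_choose m 1]
  refine sum_congr rfl fun π _ ↦ ?_
  have hcast : (((s : ℤ) + ((m + 1 : ℕ) - descents π)).toNat : ℝ) = s + m + 1 - descents π := by
    have := descents_le π
    rw [← Int.cast_natCast, Int.toNat_of_nonneg (by lia)]
    push_cast
    ring
  rw [one_add_one_eq_two, Nat.cast_choose_two, hcast]
  ring

lemma descent_moments_identity (m s : ℕ) :
    #(involutions (m + 2)) * ((s + m + 1 : ℝ) * (s + m)) -
        (2 * (s + m) + 1) * ∑ π ∈ involutions (m + 2), (descents π : ℝ) +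
        ∑ π ∈ involutions (m + 2), (descents π : ℝ) ^ 2 =
      scaledCoeff (m + 2) (m + 2) * ((s + m / 2) ^ 2 + m / 12) + 2 * scaledCoeff (m + 2) m := by
  have hsum : ∑ π ∈ involutions (m + 2), (s + m + 1 - descents π : ℝ) * (s + m - descents π) =
      #(involutions (m + 2)) * ((s + m + 1 : ℝ) * (s + m)) -
        (2 * (s + m) + 1) * ∑ π ∈ involutions (m + 2), (descents π : ℝ) +
        ∑ π ∈ involutions (m + 2), (descents π : ℝ) ^ 2 := by
    rw [← nsmul_eq_mul, ← sum_const, mul_sum, ← sum_sub_distrib, ← sum_add_distrib]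
    exact sum_congr rfl fun π _ ↦ by ring
  have hquadratic := sum_quadratic_descents m s
  rw [← sum_div, hsum] at hquadratic
  linarith

lemma card_involutions (m : ℕ) :
    (#(involutions (m + 2)) : ℝ) = scaledCoeff (m + 2) (m + 2) := by
  have h₀ := descent_moments_identity m 0
  have h₁ := descent_moments_identity m 1
  have h₂ := descent_moments_identity m 2
  push_cast at h₀ h₁ h₂
  linarith

lemma sum_descents (m : ℕ) :
    ∑ π ∈ involutions (m + 2), (descents π : ℝ) =
      scaledCoeff (m + 2) (m + 2) * ((m + 1) / 2) := by
  have h₀ := descent_moments_identity m 0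
  have h₁ := descent_moments_identity m 1
  rw [card_involutions] at h₀ h₁
  push_cast at h₀ h₁
  linarith

lemma sum_descents_sq (m : ℕ) :
    ∑ π ∈ involutions (m + 2), (descents π : ℝ) ^ 2 =
      scaledCoeff (m + 2) (m + 2) * (((m + 1) / 2) ^ 2 + (m + 3) / 12) +
        2 * scaledCoeff (m + 2) m := by
  have h := descent_moments_identity m 0
  rw [card_involutions, sum_descents] at h
  push_cast at h
  linarith

lemma invMean_add_two (m : ℕ) : invMean (m + 2) = (m + 1) / 2 := by
  rw [invMean, sum_descents, card_involutions, mul_div_cancel_left₀ _ (scaledCoeff_self_pos _).ne']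

lemma invVar_add_two (m : ℕ) :
    invVar (m + 2) =
      (m + 3) / 12 + 2 * (scaledCoeff (m + 2) m / scaledCoeff (m + 2) (m + 2)) := by
  have hpos := scaledCoeff_self_pos (m + 2)
  have hsum : ∑ π ∈ involutions (m + 2), ((descents π : ℝ) - (m + 1) / 2) ^ 2 =
      ∑ π ∈ involutions (m + 2), (descents π : ℝ) ^ 2 -
        (m + 1) * ∑ π ∈ involutions (m + 2), (descents π : ℝ) +
        #(involutions (m + 2)) * (((m + 1 : ℝ) / 2) ^ 2) := by
    rw [← nsmul_eq_mul, ← sum_const, mul_sum, ← sum_sub_distrib, ← sum_add_distrib]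
    exact sum_congr rfl fun π _ ↦ by ring
  rw [invVar, invMean_add_two, hsum, sum_descents_sq, sum_descents, card_involutions]
  field_simp
  ring

end DescentCounts

/-! ### Comparison with the normal law -/

section Approximation

lemma one_div_sqrt_div_twelve_le {a : ℝ} (ha : 0 < a) : 1 / √(a / 12) ≤ 4 / √a := by
  have h : √a ≤ 4 * √(a / 12) := by
    refine Real.sqrt_le_iff.2 ⟨by positivity, ?_⟩
    rw [mul_pow, Real.sq_sqrt (by positivity)]
    linarith
  rw [div_le_div_iff₀ (by positivity) (by positivity)]
  linarith

lemma abs_irwinHallCDF_sub_stdNormalCDF_le (k : ℕ) (x : ℝ) :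
    |irwinHallCDF k x - stdNormalCDF ((x - (k + 1) / 2) / √((k + 1 : ℕ) / 12))| ≤
      52 / √(k + 1 : ℕ) := by
  have hk : (0 : ℝ) < (k + 1 : ℕ) := by positivity
  have hvar : √((k + 1 : ℕ) / 12 : ℝ) ^ 2 = (k + 1) / 12 := by
    rw [Real.sq_sqrt (by positivity)]
    push_cast
    rfl
  calc |irwinHallCDF k x - stdNormalCDF ((x - (k + 1) / 2) / √((k + 1 : ℕ) / 12))|
      ≤ 13 / √((k + 1 : ℕ) / 12) :=
        abs_unitAverage_pow_ramp_sub_stdNormalCDF_le (by positivity) hvar _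
    _ = 13 * (1 / √((k + 1 : ℕ) / 12)) := by ring
    _ ≤ 13 * (4 / √(k + 1 : ℕ)) :=
        mul_le_mul_of_nonneg_left (one_div_sqrt_div_twelve_le hk) (by norm_num)
    _ = 52 / √(k + 1 : ℕ) := by ring

lemma abs_stdNormalCDF_div_sub_le {a u v : ℝ} (ha : 0 < a) (huv : |u - v| ≤ 1) :
    |stdNormalCDF (u / √(a / 12)) - stdNormalCDF (v / √(a / 12))| ≤ 4 / √a :=
  calc |stdNormalCDF (u / √(a / 12)) - stdNormalCDF (v / √(a / 12))|
      ≤ |u / √(a / 12) - v / √(a / 12)| := abs_stdNormalCDF_sub_le_abs_sub _ _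
    _ = |u - v| / √(a / 12) := by rw [← sub_div, abs_div, abs_of_nonneg (Real.sqrt_nonneg _)]
    _ ≤ 1 / √(a / 12) := by gcongr
    _ ≤ 4 / √a := one_div_sqrt_div_twelve_le ha

lemma abs_difference_irwinHallCDF_le (k : ℕ) (x : ℝ) :
    |difference (irwinHallCDF k) x| ≤ 108 / √(k + 1 : ℕ) := by
  have hleft := abs_irwinHallCDF_sub_stdNormalCDF_le k x
  have hright := abs_irwinHallCDF_sub_stdNormalCDF_le k (x + 1)
  have hnormal := abs_stdNormalCDF_div_sub_le (a := (k + 1 : ℕ)) (u := x + 1 - (k + 1) / 2)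
    (v := x - (k + 1) / 2) (by positivity) (by ring_nf; simp)
  have hsum : 108 / √(k + 1 : ℕ) = 52 / √(k + 1 : ℕ) + 4 / √(k + 1 : ℕ) + 52 / √(k + 1 : ℕ) := by
    ring
  rw [abs_le] at hleft hright hnormal
  rw [difference_apply, hsum, abs_le]
  constructor <;> linarith

lemma abs_irwinHallCDF_floor_sub_stdNormalCDF_le (k : ℕ) (u : ℝ) :
    |irwinHallCDF k (⌊k / 2 + u⌋ + 1) - stdNormalCDF (u / √((k + 1 : ℕ) / 12))| ≤
      56 / √(k + 1 : ℕ) := by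
  have hfloor : |(⌊k / 2 + u⌋ + 1 - (k + 1) / 2 : ℝ) - u| ≤ 1 := by
    have hle := Int.floor_le (k / 2 + u)
    have hlt := Int.lt_floor_add_one (k / 2 + u)
    exact abs_le.2 ⟨by linarith, by linarith⟩
  calc _ ≤ 52 / √(k + 1 : ℕ) + 4 / √(k + 1 : ℕ) :=
        (abs_sub_le _ _ _).trans (add_le_add (abs_irwinHallCDF_sub_stdNormalCDF_le k _)
          (abs_stdNormalCDF_div_sub_le (by positivity) hfloor))
    _ = 56 / √(k + 1 : ℕ) := by ring

lemma sum_half_pow_sub_le (n : ℕ) : ∑ k ∈ range n, (1 / 2 : ℝ) ^ (n - k) ≤ 1 := by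
  have hsum : ∑ k ∈ range n, (1 / 2 : ℝ) ^ (n - k) = 1 - (1 / 2) ^ n := by
    induction n with
    | zero => simp
    | succ n ih =>
      rw [sum_range_succ']
      simp only [Nat.add_sub_add_right, Nat.sub_zero]
      rw [ih, pow_succ]
      ring
  rw [hsum, sub_le_self_iff]
  positivity

lemma sqrt_add_le_two_pow_mul_sqrt (k j : ℕ) :
    √(k + j + 1 : ℕ) ≤ 2 ^ j * √(k + 1 : ℕ) := by
  have hpow : j + 1 ≤ (2 ^ j) ^ 2 :=
    j.lt_two_pow_self.trans_le (Nat.le_self_pow two_ne_zero _)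
  have hprod : k + j + 1 ≤ (2 ^ j) ^ 2 * (k + 1) :=
    calc k + j + 1 ≤ (j + 1) * (k + 1) := by nlinarith
      _ ≤ (2 ^ j) ^ 2 * (k + 1) := Nat.mul_le_mul_right _ hpow
  refine Real.sqrt_le_iff.2 ⟨by positivity, ?_⟩
  rw [mul_pow, Real.sq_sqrt (by positivity)]
  exact_mod_cast hprod

lemma abs_difference_pow_irwinHallCDF_le (k j : ℕ) (x : ℝ) :
    |(difference ^ (j + 1)) (irwinHallCDF k) x| ≤ 108 * 4 ^ (j + 1) / √(k + (j + 1) + 1 : ℕ) := by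
  have hsqrt : 1 / √(k + 1 : ℕ) ≤ 2 ^ (j + 1) / √(k + (j + 1) + 1 : ℕ) := by
    rw [div_le_div_iff₀ (by positivity) (by positivity), one_mul]
    exact sqrt_add_le_two_pow_mul_sqrt k (j + 1)
  rw [pow_succ, Module.End.mul_apply]
  calc |(difference ^ j) (difference (irwinHallCDF k)) x|
      ≤ 2 ^ j * (108 / √(k + 1 : ℕ)) :=
        abs_difference_pow_apply_le j (abs_difference_irwinHallCDF_le k) x
    _ = 108 * 2 ^ j * (1 / √(k + 1 : ℕ)) := by ring
    _ ≤ 108 * 2 ^ (j + 1) * (2 ^ (j + 1) / √(k + (j + 1) + 1 : ℕ)) := by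
        gcongr
        · norm_num
        · lia
    _ = 108 * 4 ^ (j + 1) / √(k + (j + 1) + 1 : ℕ) := by
        rw [show (4 : ℝ) = 2 * 2 by norm_num, mul_pow]
        ring

lemma abs_scaledCoeff_mul_difference_pow_le {n k : ℕ} (h : k < n) (x : ℝ) :
    |scaledCoeff (n + 1) (k + 1) * (difference ^ (n - k)) (irwinHallCDF k) x| ≤
      scaledCoeff (n + 1) (n + 1) * (108 * Real.exp 32 / √(n + 1 : ℕ) * (1 / 2) ^ (n - k)) := by
  obtain ⟨j, rfl⟩ : ∃ j, n = k + (j + 1) := ⟨n - k - 1, by lia⟩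
  rw [Nat.add_sub_cancel_left, abs_mul, abs_of_nonneg (scaledCoeff_nonneg _ _)]
  set t := scaledCoeff (k + (j + 1) + 1) (k + (j + 1) + 1)
  have ht : 0 ≤ t := scaledCoeff_nonneg _ _
  have hcoeff : scaledCoeff (k + (j + 1) + 1) (k + 1) ≤ Real.exp 32 / 8 ^ (j + 1) * t :=
    (scaledCoeff_le _ (k + 1) (j + 1) (by lia)).trans
      (mul_le_mul_of_nonneg_right
        ((le_div_iff₀ (by positivity)).2 (decayRate_mul_eight_pow_le _)) ht)
  calc _ ≤ Real.exp 32 / 8 ^ (j + 1) * t *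
        (108 * 4 ^ (j + 1) / √(k + (j + 1) + 1 : ℕ)) :=
        mul_le_mul hcoeff (abs_difference_pow_irwinHallCDF_le k j x) (abs_nonneg _) (by positivity)
    _ = t * (108 * Real.exp 32 / √(k + (j + 1) + 1 : ℕ) * (1 / 2) ^ (j + 1)) := by
        rw [show (8 : ℝ) = 2 * 4 by norm_num, mul_pow, div_pow, one_pow]
        field_simp

theorem abs_card_descents_le_sub_irwinHallCDF_le (n : ℕ) (z : ℤ) :
    |(#{π ∈ involutions (n + 1) | (descents π : ℤ) ≤ z} : ℝ) / scaledCoeff (n + 1) (n + 1) -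
      irwinHallCDF n (z + 1)| ≤ 108 * Real.exp 32 / √(n + 1 : ℕ) := by
  have hpos := scaledCoeff_self_pos (n + 1)
  set t := scaledCoeff (n + 1) (n + 1)
  set B := 108 * Real.exp 32 / √(n + 1 : ℕ)
  have hB : 0 ≤ B := by positivity
  have hlow : |∑ k ∈ range n, scaledCoeff (n + 1) (k + 1) *
      (difference ^ (n - k)) (irwinHallCDF k) (z - n + (k + 1))| ≤ B * t :=
    calc _ ≤ ∑ k ∈ range n, t * (B * (1 / 2) ^ (n - k)) :=
          (abs_sum_le_sum_abs _ _).trans (sum_le_sum fun k hk ↦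
            abs_scaledCoeff_mul_difference_pow_le (mem_range.1 hk) _)
      _ = t * B * ∑ k ∈ range n, (1 / 2) ^ (n - k) := by simp only [mul_sum, mul_assoc]
      _ ≤ B * t := by
        rw [mul_comm B]
        exact mul_le_of_le_one_right (mul_nonneg hpos.le hB) (sum_half_pow_sub_le n)
  rw [card_descents_le, sum_range_succ, Nat.sub_self, pow_zero, Module.End.one_apply, add_div,
    mul_div_cancel_left₀ _ hpos.ne', show (z - n + (n + 1) : ℝ) = z + 1 by ring,
    add_sub_cancel_right, abs_div, abs_of_pos hpos, div_le_iff₀ hpos]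
  exact hlow

lemma invCDF_eq_card_descents_le_floor {n : ℕ} (hvar : 0 < invVar n) (x : ℝ) :
    invCDF n x =
      (#{π ∈ involutions n | (descents π : ℤ) ≤ ⌊invMean n + √(invVar n) * x⌋} : ℝ) /
        #(involutions n) := by
  have hfilter : {π ∈ involutions n | ((descents π : ℝ) - invMean n) / √(invVar n) ≤ x} =
      {π ∈ involutions n | (descents π : ℤ) ≤ ⌊invMean n + √(invVar n) * x⌋} :=
    filter_congr fun π _ ↦ by
      rw [div_le_iff₀ (Real.sqrt_pos.2 hvar), Int.le_floor, Int.cast_natCast, sub_le_iff_le_add',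
        mul_comm]
  rw [invCDF, hfilter]

lemma invVar_add_two_mem_Icc (m : ℕ) :
    invVar (m + 2) ∈ Set.Icc ((m + 2 : ℕ) / 12 : ℝ) (((m + 2 : ℕ) + 13) / 12) := by
  have hpos := scaledCoeff_self_pos (m + 2)
  have hnonneg : 0 ≤ scaledCoeff (m + 2) m / scaledCoeff (m + 2) (m + 2) :=
    div_nonneg (scaledCoeff_nonneg _ _) hpos.le
  have hle : scaledCoeff (m + 2) m / scaledCoeff (m + 2) (m + 2) ≤ 1 / 2 := by
    have h := scaledCoeff_le (m + 2) m 2 rfl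
    rwa [← mul_one 2, decayRate_two_mul, pow_one, Nat.factorial_one, Nat.cast_one, div_one,
      mul_one, ← div_le_iff₀ hpos] at h
  rw [invVar_add_two]
  push_cast
  exact ⟨by linarith, by linarith⟩

lemma sqrt_div_sqrt_sub_one_le {a v : ℝ} (ha : 1 ≤ a) (hv : v ∈ Set.Icc (a / 12) ((a + 13) / 12)) :
    √v / √(a / 12) - 1 ≤ 7 / √a := by
  have hsq : (√v / √(a / 12)) ^ 2 ≤ 1 + 13 / a := by
    rw [div_pow, Real.sq_sqrt (by linarith [hv.1]), Real.sq_sqrt (by positivity),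
      div_le_iff₀ (by positivity)]
    refine hv.2.trans_eq ?_
    field_simp
  have hsqrt : 13 / a ≤ 13 / √a := by
    gcongr
    exact (Real.sqrt_le_left (by positivity)).2 (le_self_pow₀ ha two_ne_zero)
  have hlinear : √v / √(a / 12) - 1 ≤ 13 / √a / 2 := by
    nlinarith [sq_nonneg (√v / √(a / 12) - 1)]
  refine hlinear.trans ?_
  rw [div_div, mul_comm, ← div_div]
  gcongr
  norm_num

end Approximation

/-- Berry–Esseen bound for the number of descents in random involutions. -/
theorem descents_involutions_berry_esseen :
    ∃ C : ℝ, 0 < C ∧ ∀ n : ℕ, 2 ≤ n → ∀ x : ℝ,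
      |invCDF n x - stdNormalCDF x| ≤ C / Real.sqrt n := by
  refine ⟨108 * Real.exp 32 + 56 + 7, by positivity, fun n hn x ↦ ?_⟩
  obtain ⟨m, rfl⟩ := Nat.exists_eq_add_of_le' hn
  have hvar := invVar_add_two_mem_Icc m
  have hvar_pos : 0 < invVar (m + 2) := lt_of_lt_of_le (by positivity) hvar.1
  set s := √(invVar (m + 2))
  set σ := √((m + 2 : ℕ) / 12)
  have hmixture : |invCDF (m + 2) x - irwinHallCDF (m + 1) (⌊(m + 1 : ℕ) / 2 + s * x⌋ + 1)| ≤
      108 * Real.exp 32 / √(m + 2 : ℕ) := by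
    rw [invCDF_eq_card_descents_le_floor hvar_pos, card_involutions, invMean_add_two]
    exact_mod_cast abs_card_descents_le_sub_irwinHallCDF_le (m + 1) _
  have hnormal := abs_irwinHallCDF_floor_sub_stdNormalCDF_le (m + 1) (s * x)
  have hscale : |stdNormalCDF (s / σ * x) - stdNormalCDF x| ≤ 7 / √(m + 2 : ℕ) :=
    (abs_stdNormalCDF_mul_sub_le
      ((one_le_div (by positivity)).2 (Real.sqrt_le_sqrt hvar.1)) x).trans
      (sqrt_div_sqrt_sub_one_le (by exact_mod_cast (by lia : 1 ≤ m + 2)) hvar)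
  rw [div_mul_eq_mul_div] at hscale
  rw [add_div, add_div]
  exact (abs_sub_le _ _ _).trans
    (add_le_add ((abs_sub_le _ _ _).trans (add_le_add hmixture hnormal)) hscale)
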